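/- arXiv:2112.13599 — 2 statements merged into one kernel-verified Lean document; each statement's English description precedes it below -/
import Mathlib

section
/- Let g ≥ 2 and 1 < a₁ < ⋯ < a_{g−1}, let f(z) = z(z²−1)(z²−a₁²)⋯(z²−a_{g−1}²), and let Π₀ = [I_{j,k}] be the g×g real matrix of hyperelliptic integrals defined (according to the parity of g) as in the construction of the period matrix. Let M = diag((−1)^{j−1})_{j=1}^{g} and let N be the g×g matrix with N_{j,k} = (−1)^{g+1−j−k} if j + k ≤ g + 1 and 0 otherwise. Then the real matrix Π₀⁻¹·M·Π₀·N is positive definite. -/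
/-! The imaginary part of the period matrix is written as `A⁻¹ * (C * U)`, for arbitrary real branch
points `e 0 < ⋯ < e (2 g)`: the columns of `A` and `C` are the moments `∫ x ^ j / √|f|` over the gaps
`[e i, e (i + 1)]` of even and odd index respectively, and `U` is unit lower triangular with
alternating signs (the passage from the gaps to the dual cycles). For the symmetric configuration
of `PiZero` the reflection `x ↦ -x` exchanges even and odd gaps, which gives `A = Π₀` and
`C * U = M * Π₀ * N` (`piZero_eq`, `mul_piZero_mul`).

Symmetry is Riemann's bilinear relation, that is, symmetry of `C * U * Aᵀ`. Let `φ_j` be the branch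
of `z ^ j / √f` which is holomorphic in the upper half-plane; on the real axis it is `x ^ j / √|f|`
times a power of `-i` which is constant on each gap. Since `2 j + 2 < deg f`, Cauchy's theorem gives
`∫ φ_j = 0` and `∬_{x < y} φ_j(x) φ_j'(y) = 0` on the real axis. Taking imaginary parts shows that
`∬_{x < y} Re φ_j(x) Im φ_j'(y)` is symmetric in `j, j'` (`pairing_symm`), and evaluating this
integral gap by gap yields the entries of `(C * U * Aᵀ)ᵀ` (`pairing_eq_sum`).

Positivity is Sylvester's criterion. The trailing principal minors of `A⁻¹ * (C * U)` are quotients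
by `det A` of determinants whose first `m` columns come from `A` and the others from `C`. These are
determinants of moments over intervals in increasing order, hence integrals of positive Vandermonde
determinants (`det_moments_pos`). -/

open MeasureTheory intervalIntegral Matrix

/-- The `g × g` real matrix `Π₀ = [I_{j,k}]` of hyperelliptic integrals of the curve
`w² = f(z)`, `f z = z ∏_{i<g} (z² - a i ²)` (with the convention `a 0 = 1`), defined
according to the parity of `g` as in the paper.  Indices `j k : Fin g` correspond to
the 1-based indices `J = j + 1`, `K = k + 1`. -/
noncomputable def PiZero (g : ℕ) (a : ℕ → ℝ) : Matrix (Fin g) (Fin g) ℝ :=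
  Matrix.of fun j k : Fin g =>
    let J : ℕ := (j : ℕ) + 1
    let K : ℕ := (k : ℕ) + 1
    let f : ℝ → ℝ := fun z => z * ∏ i ∈ Finset.range g, (z ^ 2 - a i ^ 2)
    if g % 2 = 0 then
      if K ≤ g / 2 - 1 then
        (-1 : ℝ) ^ (J - 1) *
          ∫ z in (a (g - 2 * K))..(a (g - 2 * K + 1)), z ^ (J - 1) / Real.sqrt |f z|
      else if K = g / 2 then
        (-1 : ℝ) ^ (J - 1) *
          ∫ z in (1 : ℝ)..(a 1), z ^ (J - 1) / Real.sqrt |f z|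
      else if K = g / 2 + 1 then
        ∫ z in (0 : ℝ)..(1 : ℝ), z ^ (J - 1) / Real.sqrt |f z|
      else
        ∫ z in (a (2 * K - g - 3))..(a (2 * K - g - 2)), z ^ (J - 1) / Real.sqrt |f z|
    else
      if K ≤ (g - 1) / 2 then
        (-1 : ℝ) ^ (J - 1) *
          ∫ z in (a (g - 2 * K))..(a (g - 2 * K + 1)), z ^ (J - 1) / Real.sqrt |f z|
      else if K = (g + 1) / 2 then
        (-1 : ℝ) ^ (J - 1) *
          ∫ z in (0 : ℝ)..(1 : ℝ), z ^ (J - 1) / Real.sqrt |f z|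
      else if K = (g + 3) / 2 then
        ∫ z in (1 : ℝ)..(a 1), z ^ (J - 1) / Real.sqrt |f z|
      else
        ∫ z in (a (2 * K - g - 3))..(a (2 * K - g - 2)), z ^ (J - 1) / Real.sqrt |f z|

/-! ### Linear algebra -/

/-- The matrix whose columns of index `< m` are those of `X` and whose remaining columns are
those of `Y`. -/
def mixCols {g : ℕ} (X Y : Matrix (Fin g) (Fin g) ℝ) (m : ℕ) : Matrix (Fin g) (Fin g) ℝ :=
  Matrix.of fun j k => if (k : ℕ) < m then X j k else Y j k

/-- A form of Sylvester's criterion: a symmetric matrix with positive trailing principal minors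
is positive definite. The trailing minor on the indices `≥ m` is written as the determinant of
`mixCols 1 S m`. -/
lemma posDef_of_trailing {g : ℕ} (S : Matrix (Fin g) (Fin g) ℝ) (hS : S.IsSymm)
    (hdet : ∀ m, 0 < (mixCols 1 S m).det) : S.PosDef := by
  refine Matrix.PosDef.of_dotProduct_mulVec_pos ?_ ?_
  · rw [Matrix.IsHermitian, Matrix.conjTranspose_eq_transpose_of_trivial]; exact hS
  -- Induction on the number `d` of trailing coordinates: `v` splits `S`-orthogonally into a vector
  -- supported on the indices `> m` and a multiple of the vector `w` with `S w` supported at `m`.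
  have key : ∀ d m : ℕ, m + d = g → ∀ v : Fin g → ℝ, (∀ i : Fin g, (i : ℕ) < m → v i = 0) →
      v ≠ 0 → 0 < v ⬝ᵥ (S *ᵥ v) := by
    intro d
    induction d with
    | zero =>
      intro m hm v hv hne
      exact absurd (funext fun i => hv i (by omega)) hne
    | succ d ih =>
      intro m hm v hv hne
      have hmg : m < g := by omega
      set i₀ : Fin g := ⟨m, hmg⟩ with hi₀
      -- `u` solves `mixCols 1 S m *ᵥ u = det • e_m` by Cramer's rule.
      set u := (mixCols 1 S m).cramer (Pi.single i₀ 1) with hu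
      have hSu : (mixCols 1 S m) *ᵥ u = (mixCols 1 S m).det • Pi.single i₀ 1 :=
        Matrix.mulVec_cramer _ _
      have hu0 : u i₀ = (mixCols 1 S (m + 1)).det := by
        rw [hu, Matrix.cramer_apply]
        congr 1
        ext j k
        rw [Matrix.updateCol_apply]
        simp only [mixCols, Matrix.of_apply]
        by_cases hk : k = i₀
        · subst hk
          simp [hi₀, Matrix.one_apply, Pi.single_apply]
        · have : (k : ℕ) ≠ m := fun h => hk (Fin.ext h)
          rw [if_neg hk]
          by_cases h : (k : ℕ) < m
          · rw [if_pos h, if_pos (by omega)]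
          · rw [if_neg h, if_neg (by omega)]
      have hu0pos : 0 < u i₀ := hu0 ▸ hdet (m + 1)
      set w : Fin g → ℝ := fun i => if (i : ℕ) < m then 0 else u i with hw
      have hw0 : w i₀ = u i₀ := by simp [hw, hi₀]
      have hSw : ∀ i : Fin g, m ≤ (i : ℕ) →
          (S *ᵥ w) i = (mixCols 1 S m).det * (Pi.single i₀ 1 : Fin g → ℝ) i := by
        intro i hi
        have := congrFun hSu i
        rw [Pi.smul_apply, smul_eq_mul] at this
        rw [← this]
        simp only [Matrix.mulVec, dotProduct]
        refine Finset.sum_congr rfl fun k _ => ?_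
        simp only [mixCols, Matrix.of_apply, hw]
        by_cases h : (k : ℕ) < m
        · have : i ≠ k := by rintro rfl; omega
          simp [h, this]
        · simp [h]
      have hxSw : ∀ x : Fin g → ℝ, (∀ i : Fin g, (i : ℕ) < m → x i = 0) →
          x ⬝ᵥ (S *ᵥ w) = x i₀ * (mixCols 1 S m).det := by
        intro x hx
        simp only [dotProduct]
        rw [Finset.sum_eq_single i₀]
        · rw [hSw i₀ le_rfl]; simp
        · intro i _ hi
          by_cases h : (i : ℕ) < m
          · simp [hx i h]
          · rw [hSw i (by omega)]; simp [hi]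
        · simp
      have hsymm : ∀ x y : Fin g → ℝ, x ⬝ᵥ (S *ᵥ y) = y ⬝ᵥ (S *ᵥ x) := by
        intro x y
        rw [Matrix.dotProduct_mulVec, ← Matrix.mulVec_transpose, hS.eq, dotProduct_comm]
      set t := v i₀ / u i₀ with ht
      set v' := v - t • w with hv'
      have hv'0 : ∀ i : Fin g, (i : ℕ) < m + 1 → v' i = 0 := by
        intro i hi
        rcases Nat.lt_succ_iff_lt_or_eq.mp hi with h | h
        · simp [hv', hv i h, hw, h]
        · have : i = i₀ := Fin.ext h
          rw [this]
          simp [hv', hw0, ht, hu0pos.ne']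
      have hvdec : v = v' + t • w := by simp [hv']
      have hcross : v' ⬝ᵥ (S *ᵥ w) = 0 := by
        rw [hxSw v' (fun i hi => hv'0 i (by omega)), hv'0 i₀ (by simp [hi₀]), zero_mul]
      have hww : w ⬝ᵥ (S *ᵥ w) = u i₀ * (mixCols 1 S m).det := by
        rw [hxSw w (fun i hi => by simp [hw, hi]), hw0]
      have hexp : v ⬝ᵥ (S *ᵥ v) =
          v' ⬝ᵥ (S *ᵥ v') + t ^ 2 * (u i₀ * (mixCols 1 S m).det) := by
        rw [hvdec, Matrix.mulVec_add, Matrix.mulVec_smul, add_dotProduct, dotProduct_add,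
          dotProduct_add, smul_dotProduct, smul_dotProduct, dotProduct_smul, dotProduct_smul,
          hsymm w v', hcross, hww]
        simp only [smul_eq_mul]; ring
      rw [hexp]
      have hpos : 0 < u i₀ * (mixCols 1 S m).det := mul_pos hu0pos (hdet m)
      by_cases hz : v' = 0
      · have : t ≠ 0 := by
          rintro h0
          apply hne
          rw [hvdec, hz, h0]; simp
        rw [hz]; simp only [zero_dotProduct, zero_add]
        positivity
      · have := ih (m + 1) (by omega) v' hv'0 hz
        positivity
  intro x hx
  simpa using key g 0 (by omega) x (by simp) hx

/-- If `A * S = C * U` with `U` unit lower triangular, then the trailing principal minors of `S`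
are quotients of determinants of matrices mixing columns of `A` and of `C`. -/
lemma posDef_inv_mul {g : ℕ} (A C U : Matrix (Fin g) (Fin g) ℝ)
    (hU : ∀ l k, l < k → U l k = 0) (hU1 : ∀ k, U k k = 1)
    (hdet : ∀ m, 0 < (mixCols A C m).det)
    (hsymm : (C * U * Aᵀ).IsSymm) : (A⁻¹ * (C * U)).PosDef := by
  have hA : 0 < A.det := by
    have := hdet g
    rwa [show mixCols A C g = A by ext j k; simp [mixCols]] at this
  have hAu : IsUnit A.det := hA.ne'.isUnit
  have hAAi : A * A⁻¹ = 1 := Matrix.mul_nonsing_inv _ hAu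
  refine posDef_of_trailing _ ?_ ?_
  · have h1 : A⁻¹ * (C * U) = A⁻¹ * (C * U * Aᵀ) * (A⁻¹)ᵀ := by
      rw [Matrix.mul_assoc, Matrix.mul_assoc, ← Matrix.transpose_mul, Matrix.nonsing_inv_mul _ hAu]
      simp
    rw [h1, Matrix.IsSymm, Matrix.transpose_mul, Matrix.transpose_mul, hsymm.eq]
    simp [Matrix.mul_assoc]
  · intro m
    have h1 : A * mixCols 1 (A⁻¹ * (C * U)) m = mixCols A C m * mixCols 1 U m := by
      ext j k
      by_cases hk : (k : ℕ) < m
      · simp only [Matrix.mul_apply, mixCols, Matrix.of_apply, hk, if_true]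
        rw [Finset.sum_eq_single k, Finset.sum_eq_single k]
        · simp [hk]
        · intro i _ hi; simp [hi]
        · simp
        · intro i _ hi; simp [hi]
        · simp
      · have e1 : (A * mixCols 1 (A⁻¹ * (C * U)) m) j k = (A * (A⁻¹ * (C * U))) j k := by
          rw [Matrix.mul_apply, Matrix.mul_apply]
          simp only [mixCols, Matrix.of_apply, hk, if_false]
        rw [e1, ← Matrix.mul_assoc, hAAi, Matrix.one_mul]
        simp only [Matrix.mul_apply, mixCols, Matrix.of_apply, hk, if_false]
        refine Finset.sum_congr rfl fun l _ => ?_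
        by_cases hl : l < k
        · simp [hU l k hl]
        · have : ¬ (l : ℕ) < m := by
            have : (k : ℕ) ≤ l := Fin.not_lt.mp hl
            omega
          simp [this]
    have h2 : (mixCols 1 U m).det = 1 := by
      rw [Matrix.det_of_isLowerTriangular]
      · refine Finset.prod_eq_one fun i _ => ?_
        simp only [mixCols, Matrix.of_apply]
        split_ifs <;> simp [hU1]
      · intro i j hij
        have hij' : i < j := by simpa using hij
        simp only [mixCols, Matrix.of_apply]
        split_ifs
        · simp [hij'.ne]
        · exact hU i j hij'
    have h3 := congrArg Matrix.det h1
    rw [Matrix.det_mul, Matrix.det_mul, h2, mul_one] at h3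
    have := hdet m
    rw [← h3] at this
    exact (pos_iff_pos_of_mul_pos this).mp hA

/-- Determinants of moments over increasing intervals are positive: expanding one column at a
time expresses them as integrals of Vandermonde determinants at increasing points. -/
lemma det_moments_pos {g : ℕ} (r : ℝ → ℝ) (s t : Fin g → ℝ) (hst : ∀ k, s k < t k)
    (hts : ∀ k l, k < l → t k ≤ s l)
    (hr : ∀ k, ∀ x ∈ Set.Ioo (s k) (t k), 0 < r x)
    (hint : ∀ k (j : Fin g), IntervalIntegrable (fun x => x ^ (j : ℕ) * r x) volume (s k) (t k)) :
    0 < (Matrix.of fun j k : Fin g => ∫ x in (s k)..(t k), x ^ (j : ℕ) * r x).det := by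
  classical
  -- `K` is the set of columns already replaced by integrals.
  have key : ∀ K : Finset (Fin g), ∀ x : Fin g → ℝ, (∀ k, x k ∈ Set.Ioo (s k) (t k)) →
      0 < (Matrix.of fun j k : Fin g =>
        if k ∈ K then ∫ x in (s k)..(t k), x ^ (j : ℕ) * r x else x k ^ (j : ℕ)).det := by
    intro K
    induction K using Finset.induction_on with
    | empty =>
      intro x hx
      have : (Matrix.of fun j k : Fin g => if k ∈ (∅ : Finset (Fin g)) then
          ∫ x in (s k)..(t k), x ^ (j : ℕ) * r x else x k ^ (j : ℕ)) = (vandermonde x)ᵀ := by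
        ext j k; simp [vandermonde]
      rw [this, Matrix.det_transpose, Matrix.det_vandermonde]
      refine Finset.prod_pos fun i _ => Finset.prod_pos fun j hj => ?_
      have := hts i j (Finset.mem_Ioi.mp hj)
      linarith [(hx i).2, (hx j).1]
    | insert k₀ K hk₀ ih =>
      intro x hx
      set Y : Matrix (Fin g) (Fin g) ℝ := Matrix.of fun j k : Fin g =>
        if k ∈ K then ∫ x in (s k)..(t k), x ^ (j : ℕ) * r x else x k ^ (j : ℕ) with hY
      have h1 : (Matrix.of fun j k : Fin g => if k ∈ insert k₀ K then
          ∫ x in (s k)..(t k), x ^ (j : ℕ) * r x else x k ^ (j : ℕ)) =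
          Y.updateCol k₀ (fun j => ∫ x in (s k₀)..(t k₀), x ^ (j : ℕ) * r x) := by
        ext j k
        rw [Matrix.updateCol_apply]
        by_cases hk : k = k₀
        · subst hk; simp
        · simp [hY, hk]
      -- Laplace expansion along the column `k₀`.
      have h2 : ∀ b : Fin g → ℝ, (Y.updateCol k₀ b).det = ∑ j, Y.adjugate k₀ j * b j := by
        intro b
        rw [← Matrix.cramer_apply, Matrix.cramer_eq_adjugate_mulVec]; rfl
      rw [h1, h2]
      have h3 : ∑ j : Fin g, Y.adjugate k₀ j * ∫ x in (s k₀)..(t k₀), x ^ (j : ℕ) * r x =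
          ∫ y in (s k₀)..(t k₀), (Y.updateCol k₀ (fun j => y ^ (j : ℕ))).det * r y := by
        simp_rw [h2, Finset.sum_mul, mul_assoc]
        rw [intervalIntegral.integral_finsetSum]
        · simp_rw [intervalIntegral.integral_const_mul]
        · intro j _
          exact (hint k₀ j).const_mul _
      rw [h3]
      refine intervalIntegral.intervalIntegral_pos_of_pos_on ?_ ?_ (hst k₀)
      · simp_rw [h2, Finset.sum_mul, mul_assoc]
        have := IntervalIntegrable.sum (f := fun (j : Fin g) y =>
          Y.adjugate k₀ j * (y ^ (j : ℕ) * r y)) Finset.univ fun j _ => (hint k₀ j).const_mul _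
        simpa only [Finset.sum_fn] using this
      · intro y hy
        refine mul_pos ?_ (hr k₀ y hy)
        have h4 := ih (Function.update x k₀ y) (by
          intro k
          by_cases hk : k = k₀
          · subst hk; simpa using hy
          · simpa [hk] using hx k)
        refine h4.trans_eq (congrArg Matrix.det ?_)
        symm
        ext j k
        rw [Matrix.updateCol_apply]
        by_cases hk : k = k₀
        · subst hk; simp [hk₀]
        · simp [hY, hk]
  have := key Finset.univ (fun k => (s k + t k) / 2) (fun k => ⟨by linarith [hst k], by linarith [hst k]⟩)
  simpa using this

/-! ### Cauchy's theorem for a half-plane -/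

/-- A holomorphic function of order `|z| ^ (-3/2)` is integrable along horizontal lines. -/
lemma integrable_of_decay (φ : ℂ → ℂ) {η C : ℝ} (hη : 0 < η)
    (hd : DifferentiableOn ℂ φ {z | 0 < z.im})
    (hb : ∀ z : ℂ, η ≤ z.im → ‖φ z‖ ≤ C * (1 + ‖z‖) ^ (-(3 / 2) : ℝ)) :
    Integrable (fun x : ℝ => φ (x + η * Complex.I)) := by
  have hC : 0 ≤ C := by
    have := (norm_nonneg _).trans (hb (η * Complex.I) (by simp))
    exact nonneg_of_mul_nonneg_left this (by positivity)
  have hcont : Continuous (fun x : ℝ => φ (x + η * Complex.I)) :=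
    hd.continuousOn.comp_continuous (by fun_prop) (fun x => by simp [hη])
  have h1 := (integrable_one_add_norm (E := ℝ) (μ := volume) (r := 3 / 2)
    (by simp; norm_num)).const_mul C
  refine h1.mono' hcont.aestronglyMeasurable (Filter.Eventually.of_forall fun x => ?_)
  refine (hb _ (by simp)).trans (mul_le_mul_of_nonneg_left ?_ hC)
  refine Real.rpow_le_rpow_of_nonpos (by positivity) ?_ (by norm_num)
  have := Complex.abs_re_le_norm ((x : ℂ) + η * Complex.I)
  simp only [Complex.add_re, Complex.ofReal_re, Complex.mul_re, Complex.I_re, mul_zero,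
    Complex.ofReal_im, Complex.I_im, mul_one, sub_self, add_zero] at this
  rw [Real.norm_eq_abs]; linarith

/-- Cauchy's theorem for a half-plane: the integral along a horizontal line of a holomorphic
function of order `|z| ^ (-3/2)` vanishes. The contours are the boundaries of
`[-R, R] × [η, η + R]` for large `R`. -/
lemma integral_line_eq_zero (φ : ℂ → ℂ) {η C : ℝ} (hη : 0 < η)
    (hd : DifferentiableOn ℂ φ {z | 0 < z.im})
    (hb : ∀ z : ℂ, η ≤ z.im → ‖φ z‖ ≤ C * (1 + ‖z‖) ^ (-(3 / 2) : ℝ)) :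
    ∫ x : ℝ, φ (x + η * Complex.I) = 0 := by
  have hC : 0 ≤ C := by
    have := (norm_nonneg _).trans (hb (η * Complex.I) (by simp))
    exact nonneg_of_mul_nonneg_left this (by positivity)
  have hint := integrable_of_decay φ hη hd hb
  have hlim : Filter.Tendsto (fun R : ℝ => ∫ x in (-R)..R, φ (x + η * Complex.I)) Filter.atTop
      (nhds (∫ x : ℝ, φ (x + η * Complex.I))) :=
    intervalIntegral_tendsto_integral hint Filter.tendsto_neg_atTop_atBot Filter.tendsto_id
  refine tendsto_nhds_unique hlim ?_
  have hbd : ∀ R : ℝ, 0 < R → ‖∫ x in (-R)..R, φ (x + η * Complex.I)‖ ≤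
      4 * C * R ^ (-(1 / 2) : ℝ) := by
    intro R hR
    have hside : ∀ z : ℂ, η ≤ z.im → R ≤ ‖z‖ → ‖φ z‖ ≤ C * R ^ (-(3 / 2) : ℝ) := by
      intro z hz hRz
      refine (hb z hz).trans (mul_le_mul_of_nonneg_left ?_ hC)
      exact Real.rpow_le_rpow_of_nonpos hR (by linarith) (by norm_num)
    have hrect := Complex.integral_boundary_rect_eq_zero_of_differentiableOn φ
      (-R + η * Complex.I) (R + (η + R) * Complex.I) (hd.mono (by
        intro z hz
        have := hz.2
        simp [Set.uIcc_of_le (by linarith : η ≤ η + R)] at this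
        exact hη.trans_le this.1))
    simp only [Complex.add_re, Complex.neg_re, Complex.ofReal_re, Complex.mul_re, Complex.I_re,
      mul_zero, Complex.ofReal_im, Complex.I_im, mul_one, sub_self, add_zero, Complex.add_im,
      Complex.neg_im, neg_zero, Complex.mul_im, zero_add, smul_eq_mul] at hrect
    set I1 := ∫ x in (-R)..R, φ (x + η * Complex.I)
    have b2 : ‖∫ x in (-R)..R, φ (x + ((η + R : ℝ) : ℂ) * Complex.I)‖ ≤
        C * R ^ (-(3 / 2) : ℝ) * |R - -R| := by
      refine intervalIntegral.norm_integral_le_of_norm_le_const fun x _ => hside _ ?_ ?_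
      · simp; exact hR.le
      · refine le_trans ?_ (Complex.abs_im_le_norm _)
        simp
        rw [abs_of_pos] <;> linarith
    have b3 : ‖∫ y in η..(η + R), φ (R + y * Complex.I)‖ ≤
        C * R ^ (-(3 / 2) : ℝ) * |η + R - η| := by
      refine intervalIntegral.norm_integral_le_of_norm_le_const fun y hy => hside _ ?_ ?_
      · rw [Set.uIoc_of_le (by linarith)] at hy
        simpa using hy.1.le
      · refine le_trans ?_ (Complex.abs_re_le_norm _)
        simp [abs_of_pos hR]
    have b4 : ‖∫ y in η..(η + R), φ (((-R : ℝ) : ℂ) + y * Complex.I)‖ ≤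
        C * R ^ (-(3 / 2) : ℝ) * |η + R - η| := by
      refine intervalIntegral.norm_integral_le_of_norm_le_const fun y hy => hside _ ?_ ?_
      · rw [Set.uIoc_of_le (by linarith)] at hy
        simpa using hy.1.le
      · refine le_trans ?_ (Complex.abs_re_le_norm _)
        simp [abs_of_pos hR]
    push_cast at b2 b4
    rw [show |R - -R| = 2 * R by rw [abs_of_pos] <;> linarith] at b2
    rw [show |η + R - η| = R by rw [abs_of_pos] <;> linarith] at b3 b4
    have hpow : R ^ (-(1 / 2) : ℝ) = R ^ (-(3 / 2) : ℝ) * R := by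
      rw [← Real.rpow_add_one hR.ne']; norm_num
    have hI : I1 = (∫ x in (-R)..R, φ (x + ((η : ℂ) + R) * Complex.I)) -
        Complex.I * (∫ y in η..(η + R), φ (R + y * Complex.I)) +
        Complex.I * (∫ y in η..(η + R), φ (-(R : ℂ) + y * Complex.I)) := by
      push_cast at hrect
      linear_combination hrect
    rw [hI, hpow]
    refine (norm_add_le _ _).trans ?_
    refine (add_le_add (norm_sub_le _ _) le_rfl).trans ?_
    simp only [norm_mul, Complex.norm_I, one_mul]
    linarith
  refine squeeze_zero_norm' (a := fun R : ℝ => 4 * C * R ^ (-(1 / 2) : ℝ)) ?_ ?_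
  · filter_upwards [Filter.eventually_gt_atTop 0] with R hR using hbd R hR
  · simpa using (tendsto_rpow_neg_atTop (y := 1 / 2) (by norm_num)).const_mul (4 * C)

/-! ### Integrability on the real line -/

/-- The integrable majorant of the integrands near a single branch point `c`. -/
lemma integrable_invSqrt (c : ℝ) :
    Integrable (fun x : ℝ => (√|x - c|)⁻¹ * (√(1 + x ^ 2))⁻¹) := by
  -- near `c` the second factor is at most `1`
  have hnear : IntegrableOn (fun x : ℝ => (√|x - c|)⁻¹) (Set.Icc (c - 1) (c + 1)) := by
    have h0 : IntegrableOn (fun x : ℝ => (√|x|)⁻¹) (Set.Ioc 0 1) := by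
      have := (intervalIntegral.intervalIntegrable_rpow' (a := 0) (b := 1)
        (r := -(1 / 2)) (by norm_num)).1
      refine this.congr_fun (fun x hx => ?_) measurableSet_Ioc
      simp only
      rw [abs_of_pos hx.1, Real.sqrt_eq_rpow, ← Real.rpow_neg hx.1.le]
    have h1 : IntervalIntegrable (fun x : ℝ => (√|x|)⁻¹) volume 0 1 :=
      (intervalIntegrable_iff_integrableOn_Ioc_of_le zero_le_one).mpr h0
    have h2 : IntervalIntegrable (fun x : ℝ => (√|x|)⁻¹) volume (-1) 0 := by
      have := (IntervalIntegrable.iff_comp_neg).mp h1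
      simpa using this.symm
    have h3 := (h2.trans h1).comp_sub_right c
    have h4 := (intervalIntegrable_iff_integrableOn_Icc_of_le (by linarith)).mp h3
    rwa [show -1 + c = c - 1 by ring, show 1 + c = c + 1 by ring] at h4
  set K : ℝ := (1 + |c| + 1)
  have hfar := (integrable_one_add_norm (E := ℝ) (μ := volume) (r := 3 / 2)
    (by simp; norm_num)).const_mul (√K * √2)
  have hmaj : Integrable (fun x : ℝ => (Set.Icc (c - 1) (c + 1)).indicator
      (fun x : ℝ => (√|x - c|)⁻¹) x + √K * √2 * (1 + ‖x‖) ^ (-(3 / 2) : ℝ)) :=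
    (hnear.integrable_indicator measurableSet_Icc).add hfar
  refine hmaj.mono' (Measurable.aestronglyMeasurable (by fun_prop)) (Filter.Eventually.of_forall fun x => ?_)
  rw [Real.norm_of_nonneg (by positivity)]
  by_cases hx : x ∈ Set.Icc (c - 1) (c + 1)
  · rw [Set.indicator_of_mem hx]
    have : (√(1 + x ^ 2))⁻¹ ≤ 1 := by
      apply inv_le_one_of_one_le₀
      rw [Real.one_le_sqrt]; nlinarith [sq_nonneg x]
    have h2 : (√|x - c|)⁻¹ * (√(1 + x ^ 2))⁻¹ ≤ (√|x - c|)⁻¹ :=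
      mul_le_of_le_one_right (by positivity) this
    have : 0 ≤ √K * √2 * (1 + ‖x‖) ^ (-(3 / 2) : ℝ) := by positivity
    linarith
  · rw [Set.indicator_of_notMem hx, zero_add]
    have hxc : 1 ≤ |x - c| := by
      by_contra! h
      rw [abs_lt] at h
      exact hx ⟨by linarith, by linarith⟩
    set y : ℝ := 1 + ‖x‖ with hy
    have hy1 : 1 ≤ y := by simp [hy]
    have hyK : y ≤ K * |x - c| := by
      have h1 : |x| ≤ |x - c| + |c| := by
        have := abs_add_le (x - c) c; simpa using this
      have h2 : |c| ≤ |c| * |x - c| := le_mul_of_one_le_right (abs_nonneg _) hxc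
      simp only [hy, Real.norm_eq_abs, K]; nlinarith
    have hy2 : y ^ 2 ≤ 2 * (1 + x ^ 2) := by
      simp only [hy, Real.norm_eq_abs]
      nlinarith [sq_nonneg (|x| - 1), sq_abs x]
    have e1 : (√|x - c|)⁻¹ ≤ √K * (√y)⁻¹ := by
      have : √y ≤ √K * √|x - c| := by
        rw [← Real.sqrt_mul (by positivity)]; exact Real.sqrt_le_sqrt hyK
      have hp : 0 < √|x - c| := Real.sqrt_pos.mpr (by linarith)
      have hq : 0 < √y := Real.sqrt_pos.mpr (by linarith)
      rw [← div_eq_mul_inv, le_div_iff₀ hq, inv_mul_le_iff₀ hp]; linarith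
    have e2 : (√(1 + x ^ 2))⁻¹ ≤ √2 * y⁻¹ := by
      have : y ≤ √2 * √(1 + x ^ 2) := by
        rw [← Real.sqrt_mul (by positivity)]; exact Real.le_sqrt_of_sq_le hy2
      have hp : 0 < √(1 + x ^ 2) := Real.sqrt_pos.mpr (by positivity)
      rw [← div_eq_mul_inv, le_div_iff₀ (by linarith), inv_mul_le_iff₀ hp]; linarith
    have e3 : y ^ (-(3 / 2) : ℝ) = (√y)⁻¹ * y⁻¹ := by
      rw [Real.sqrt_eq_rpow, ← Real.rpow_neg (by linarith), ← Real.rpow_neg_one y,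
        ← Real.rpow_add (by linarith)]
      norm_num
    rw [e3]
    calc _ ≤ (√K * (√y)⁻¹) * (√2 * y⁻¹) := by gcongr
      _ = _ := by ring

/-- The weight `1 / √|f|` for `f = ∏_{i < n} (x - e i)`; it is `0` at the branch points. -/
noncomputable def wt (e : ℕ → ℝ) (n : ℕ) (x : ℝ) : ℝ :=
  (√|∏ i ∈ Finset.range n, (x - e i)|)⁻¹

lemma sqrt_sum_le {ι : Type*} (s : Finset ι) (b : ι → ℝ) (hb : ∀ i ∈ s, 0 ≤ b i) :
    √(∑ i ∈ s, b i) ≤ ∑ i ∈ s, √(b i) := by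
  classical
  induction s using Finset.induction_on with
  | empty => simp
  | insert i s hi ih =>
    rw [Finset.sum_insert hi, Finset.sum_insert hi]
    have h1 := ih fun j hj => hb j (Finset.mem_insert_of_mem hj)
    have h2 : 0 ≤ ∑ i ∈ s, b i := Finset.sum_nonneg fun j hj => hb j (Finset.mem_insert_of_mem hj)
    have h3 := hb i (Finset.mem_insert_self _ _)
    refine le_trans ?_ (add_le_add le_rfl h1)
    rw [Real.sqrt_le_left (by positivity), add_sq, Real.sq_sqrt h3, Real.sq_sqrt h2]
    have : 0 ≤ 2 * √(b i) * √(∑ i ∈ s, b i) := by positivity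
    linarith

lemma measurable_wt (e : ℕ → ℝ) (n : ℕ) : Measurable (wt e n) := by
  unfold wt; fun_prop

/-- `x ^ j / √|f|` is integrable on the line when `2 j + 2 < deg f`: the partial fraction
expansion of `x ^ (2 j) (1 + x²) / f` bounds its square by a combination of the terms
`1 / (|x - e i| (1 + x²))`. -/
lemma integrable_pow_wt (e : ℕ → ℝ) (n : ℕ) (he : Set.InjOn e (Finset.range n)) (j : ℕ)
    (hj : 2 * j + 2 < n) : Integrable (fun x : ℝ => x ^ j * wt e n x) := by
  set Q : Polynomial ℝ := Polynomial.X ^ (2 * j) * (1 + Polynomial.X ^ 2) with hQ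
  have hQdeg : Q.degree < (Finset.range n).card := by
    rw [Finset.card_range]
    refine lt_of_le_of_lt (b := ((2 * j + 2 : ℕ) : WithBot ℕ)) ?_ (by exact_mod_cast hj)
    rw [hQ]; compute_degree
    exact_mod_cast le_rfl
  set c : ℕ → ℝ := fun i => |Lagrange.nodalWeight (Finset.range n) e i * Q.eval (e i)| with hc
  have hmaj : Integrable (fun x : ℝ => ∑ i ∈ Finset.range n,
      √(c i) * ((√|x - e i|)⁻¹ * (√(1 + x ^ 2))⁻¹)) :=
    integrable_finsetSum _ fun i _ => (integrable_invSqrt (e i)).const_mul _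
  refine hmaj.mono' (Measurable.aestronglyMeasurable
    ((measurable_id.pow_const j).mul (measurable_wt e n))) (Filter.Eventually.of_forall fun x => ?_)
  by_cases hx : ∀ i ∈ Finset.range n, x ≠ e i
  · have h1 := Lagrange.eval_interpolate_not_at_node (r := fun i => Q.eval (e i)) hx
    rw [← Lagrange.eq_interpolate he hQdeg, Lagrange.eval_nodal] at h1
    set F := ∏ i ∈ Finset.range n, (x - e i) with hF
    have hF0 : 0 < |F| := abs_pos.mpr (Finset.prod_ne_zero_iff.mpr fun i hi => sub_ne_zero.mpr (hx i hi))
    have h2 : x ^ (2 * j) * (1 + x ^ 2) ≤ |F| * ∑ i ∈ Finset.range n, c i * |x - e i|⁻¹ := by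
      have e1 : Q.eval x = x ^ (2 * j) * (1 + x ^ 2) := by simp [hQ]
      rw [← e1, h1]
      refine (le_abs_self _).trans ?_
      rw [abs_mul]
      refine mul_le_mul_of_nonneg_left ?_ (abs_nonneg _)
      refine (Finset.abs_sum_le_sum_abs _ _).trans (Finset.sum_le_sum fun i _ => le_of_eq ?_)
      rw [hc]; simp only [abs_mul, abs_inv]; ring
    have h3 : (x ^ j * wt e n x) ^ 2 ≤
        ∑ i ∈ Finset.range n, c i * |x - e i|⁻¹ * (1 + x ^ 2)⁻¹ := by
      rw [← Finset.sum_mul, ← div_eq_mul_inv, le_div_iff₀ (by positivity), mul_pow, wt, ← hF,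
        inv_pow, Real.sq_sqrt hF0.le, ← pow_mul, mul_comm j 2]
      rw [show x ^ (2 * j) * |F|⁻¹ * (1 + x ^ 2) = (x ^ (2 * j) * (1 + x ^ 2)) / |F| by
        field_simp, div_le_iff₀ hF0]
      linarith
    rw [Real.norm_eq_abs]
    refine (Real.abs_le_sqrt h3).trans ((sqrt_sum_le _ _ fun i _ => by positivity).trans
      (Finset.sum_le_sum fun i _ => le_of_eq ?_))
    rw [Real.sqrt_mul (by positivity), Real.sqrt_mul (by positivity), Real.sqrt_inv, Real.sqrt_inv]
    ring
  · -- at a branch point the weight is `√0⁻¹ = 0`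
    push Not at hx
    obtain ⟨i, hi, hxi⟩ := hx
    have : wt e n x = 0 := by
      rw [wt, Finset.prod_eq_zero hi (by rw [hxi, sub_self])]; simp
    rw [this, mul_zero, norm_zero]
    exact Finset.sum_nonneg fun i _ => by positivity

/-! ### The holomorphic branch on the upper half-plane -/

/-- The branch of `z ↦ z ^ j / √f(z)`, `f = ∏_{i < n} (z - e i)`, that is holomorphic on the upper
half-plane; every factor uses the principal branch, which is continuous from above on the
negative real axis, so the formula also gives the boundary values. -/
noncomputable def phi (e : ℕ → ℝ) (n j : ℕ) (z : ℂ) : ℂ :=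
  z ^ j * ∏ i ∈ Finset.range n, (z - e i) ^ ((-(1 / 2) : ℝ) : ℂ)

/-- The number of branch points to the right of `x`. -/
noncomputable def rk (e : ℕ → ℝ) (n : ℕ) (x : ℝ) : ℕ :=
  ((Finset.range n).filter fun i => x < e i).card

lemma wt_eq_prod (e : ℕ → ℝ) (n : ℕ) (x : ℝ) :
    wt e n x = ∏ i ∈ Finset.range n, |x - e i| ^ (-(1 / 2) : ℝ) := by
  rw [wt, Real.finsetProd_rpow _ _ (fun i _ => abs_nonneg _), Finset.abs_prod, Real.sqrt_eq_rpow,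
    ← Real.rpow_neg (Finset.prod_nonneg fun i _ => abs_nonneg _)]

lemma norm_phi (e : ℕ → ℝ) (n j : ℕ) (z : ℂ) :
    ‖phi e n j z‖ = ‖z‖ ^ j * ∏ i ∈ Finset.range n, ‖z - e i‖ ^ (-(1 / 2) : ℝ) := by
  rw [phi, norm_mul, norm_pow, norm_prod]
  simp_rw [Complex.norm_cpow_real]

/-- On the negative axis the principal branch of `u ^ (-1/2)` is `-i |u| ^ (-1/2)`. -/
lemma neg_cpow_half {u : ℝ} (hu : u < 0) :
    (u : ℂ) ^ ((-(1 / 2) : ℝ) : ℂ) = (|u| ^ (-(1 / 2) : ℝ) : ℝ) * (-Complex.I) := by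
  have h : Complex.exp (Real.pi * Complex.I * ((-(1 / 2) : ℝ) : ℂ)) = -Complex.I := by
    rw [show (Real.pi : ℂ) * Complex.I * ((-(1 / 2) : ℝ) : ℂ) = -(Real.pi / 2 * Complex.I) by
      push_cast; ring]
    rw [Complex.exp_neg, Complex.exp_pi_div_two_mul_I, Complex.inv_I]
  rw [Complex.ofReal_cpow_of_nonpos hu.le, abs_of_neg hu, h, Complex.ofReal_cpow (by linarith)]
  simp only [Complex.ofReal_neg]

/-- On the real axis the holomorphic branch differs from `x ^ j / √|f|` by a power of `-i`
which counts the branch points to the right. -/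
lemma phi_real (e : ℕ → ℝ) (n j : ℕ) (x : ℝ) :
    phi e n j x = ((x ^ j * wt e n x : ℝ) : ℂ) * (-Complex.I) ^ rk e n x := by
  rw [phi, wt_eq_prod, rk, Finset.card_filter, ← Finset.prod_pow_eq_pow_sum]
  push_cast
  rw [mul_assoc, ← Finset.prod_mul_distrib]
  congr 1
  refine Finset.prod_congr rfl fun i _ => ?_
  rw [← Complex.ofReal_sub]
  by_cases h : x < e i
  · have := neg_cpow_half (sub_neg.mpr h)
    push_cast at this ⊢
    rw [this]; simp [h]
  · rw [abs_of_nonneg (by linarith), Complex.ofReal_cpow (by linarith)]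
    simp [h]

lemma norm_phi_real (e : ℕ → ℝ) (n j : ℕ) (x : ℝ) :
    ‖phi e n j x‖ = ‖x ^ j * wt e n x‖ := by
  rw [phi_real, norm_mul, Complex.norm_real, norm_pow, norm_neg, Complex.norm_I, one_pow, mul_one]

/-- The principal branch takes its values on the negative axis as limits from above. -/
lemma cpow_half_tendsto {u : ℝ} (hu : u ≠ 0) :
    Filter.Tendsto (fun y : ℝ => ((u : ℂ) + y * Complex.I) ^ ((-(1 / 2) : ℝ) : ℂ))
      (nhdsWithin 0 (Set.Ioi 0)) (nhds ((u : ℂ) ^ ((-(1 / 2) : ℝ) : ℂ))) := by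
  have hlog : ContinuousWithinAt Complex.log {z : ℂ | 0 ≤ z.im} (u : ℂ) := by
    rcases lt_or_gt_of_ne hu with h | h
    · exact Complex.continuousWithinAt_log_of_re_neg_of_im_zero (by simpa) (by simp)
    · exact (continuousAt_clog (by simp [Complex.slitPlane, h])).continuousWithinAt
  have hpath : Filter.Tendsto (fun y : ℝ => (u : ℂ) + y * Complex.I)
      (nhdsWithin 0 (Set.Ioi 0)) (nhdsWithin (u : ℂ) {z : ℂ | 0 ≤ z.im}) := by
    refine tendsto_nhdsWithin_iff.mpr ⟨?_, ?_⟩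
    · have : Continuous fun y : ℝ => (u : ℂ) + y * Complex.I := by fun_prop
      have := this.tendsto 0
      simp only [Complex.ofReal_zero, zero_mul, add_zero] at this
      exact this.mono_left nhdsWithin_le_nhds
    · filter_upwards [self_mem_nhdsWithin] with y hy
      simpa using (le_of_lt hy : (0 : ℝ) ≤ y)
  have h1 := (hlog.tendsto.comp hpath).mul_const ((-(1 / 2) : ℝ) : ℂ)
  have h2 := (Complex.continuous_exp.tendsto _).comp h1
  rw [Complex.cpow_def_of_ne_zero (by exact_mod_cast hu)]
  refine h2.congr fun y => ?_
  rw [Complex.cpow_def_of_ne_zero]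
  · rfl
  · intro h
    have := congrArg Complex.re h
    simp at this; exact hu this

lemma phi_tendsto (e : ℕ → ℝ) (n j : ℕ) {x : ℝ} (hx : ∀ i ∈ Finset.range n, x ≠ e i) :
    Filter.Tendsto (fun y : ℝ => phi e n j (x + y * Complex.I))
      (nhdsWithin 0 (Set.Ioi 0)) (nhds (phi e n j x)) := by
  unfold phi
  refine Filter.Tendsto.mul ?_ (tendsto_finsetProd _ fun i hi => ?_)
  · have : Continuous fun y : ℝ => ((x : ℂ) + y * Complex.I) ^ j := by fun_prop
    have := this.tendsto 0
    simp only [Complex.ofReal_zero, zero_mul, add_zero] at this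
    exact this.mono_left nhdsWithin_le_nhds
  · have := cpow_half_tendsto (sub_ne_zero.mpr (hx i hi))
    push_cast at this ⊢
    refine this.congr fun y => ?_
    congr 1; ring

lemma phi_differentiableOn (e : ℕ → ℝ) (n j : ℕ) :
    DifferentiableOn ℂ (phi e n j) {z | 0 < z.im} := by
  unfold phi
  refine (differentiableOn_id.pow j).mul (DifferentiableOn.fun_finsetProd fun i _ => ?_)
  refine DifferentiableOn.cpow (by fun_prop) (by fun_prop) fun z hz => ?_
  refine Or.inr ?_
  have : (0 : ℝ) < z.im := hz
  simp only [Complex.sub_im, Complex.ofReal_im, sub_zero]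
  exact this.ne'

/-- Above a point of the real axis, `phi` is dominated by its boundary value. This gives the
majorants for passing to the limit on the real axis. -/
lemma norm_phi_le (e : ℕ → ℝ) (n : ℕ) {j : ℕ} {x y : ℝ}
    (hx : ∀ i ∈ Finset.range n, x ≠ e i) (hy1 : |y| ≤ 1) :
    ‖phi e n j (x + y * Complex.I)‖ ≤ (1 + |x|) ^ j * wt e n x := by
  rw [norm_phi, wt_eq_prod]
  refine mul_le_mul ?_ (Finset.prod_le_prod (fun i _ => by positivity) fun i hi => ?_)
    (Finset.prod_nonneg fun i _ => by positivity) (by positivity)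
  · refine pow_le_pow_left₀ (norm_nonneg _) ?_ _
    refine (norm_add_le _ _).trans ?_
    simp; linarith
  · refine Real.rpow_le_rpow_of_nonpos (abs_pos.mpr (sub_ne_zero.mpr (hx i hi))) ?_ (by norm_num)
    have := Complex.abs_re_le_norm ((x : ℂ) + y * Complex.I - e i)
    simpa using this

/-- The majorant of `norm_phi_le` is integrable. -/
lemma integrable_bound (e : ℕ → ℝ) (n : ℕ) (he : Set.InjOn e (Finset.range n)) (j : ℕ)
    (hj : 2 * j + 2 < n) : Integrable (fun x : ℝ => (1 + |x|) ^ j * wt e n x) := by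
  have h : ∀ x : ℝ, (1 + |x|) ^ j * wt e n x =
      ∑ m ∈ Finset.range (j + 1), (j.choose m : ℝ) * |x ^ m * wt e n x| := by
    intro x
    have hw : 0 ≤ wt e n x := by unfold wt; positivity
    rw [add_comm, add_pow, Finset.sum_mul]
    refine Finset.sum_congr rfl fun m _ => ?_
    rw [abs_mul, abs_pow, abs_of_nonneg hw]; ring
  simp_rw [h]
  refine integrable_finsetSum _ fun m hm => Integrable.const_mul ?_ _
  exact (integrable_pow_wt e n he m (by have := Finset.mem_range.mp hm; omega)).abs

/-- The order of decay `j - n/2 ≤ -3/2` needed for Cauchy's theorem. -/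
lemma phi_decay (e : ℕ → ℝ) (n j : ℕ) (hj : 2 * j + 2 < n) {η : ℝ} (hη : 0 < η) :
    ∃ C : ℝ, ∀ z : ℂ, η ≤ z.im → ‖phi e n j z‖ ≤ C * (1 + ‖z‖) ^ (-(3 / 2) : ℝ) := by
  set b : ℕ → ℝ := fun i => 1 + (1 + |e i|) / η with hb
  have hbpos : ∀ i, 0 < b i := fun i => by simp only [hb]; positivity
  refine ⟨∏ i ∈ Finset.range n, (b i) ^ (1 / 2 : ℝ), fun z hz => ?_⟩
  rw [norm_phi]
  set y : ℝ := 1 + ‖z‖ with hy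
  have hy1 : 1 ≤ y := by simp [hy]
  have h1 : ∀ i ∈ Finset.range n, ‖z - e i‖ ^ (-(1 / 2) : ℝ) ≤
      b i ^ (1 / 2 : ℝ) * y ^ (-(1 / 2) : ℝ) := by
    intro i _
    have him : η ≤ ‖z - e i‖ := by
      refine hz.trans ((le_abs_self _).trans ?_)
      have := Complex.abs_im_le_norm (z - e i)
      simpa using this
    have hle : y ≤ b i * ‖z - e i‖ := by
      have h2 : ‖z‖ ≤ ‖z - e i‖ + |e i| := by
        have := norm_add_le (z - e i) (e i : ℂ)
        simpa using this
      have h3 : (1 + |e i|) ≤ (1 + |e i|) / η * ‖z - e i‖ := by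
        rw [div_mul_eq_mul_div, le_div_iff₀ hη]
        exact mul_le_mul_of_nonneg_left him (by positivity)
      simp only [hb, hy]; linarith
    have hz0 : 0 < ‖z - e i‖ := hη.trans_le him
    rw [Real.rpow_neg hz0.le, Real.rpow_neg (by linarith), ← div_eq_mul_inv,
      inv_le_comm₀ (by positivity) (by have := hbpos i; positivity), inv_div,
      div_le_iff₀ (by have := hbpos i; positivity), ← Real.mul_rpow hz0.le (hbpos i).le]
    exact Real.rpow_le_rpow (by linarith) (by linarith) (by norm_num)
  have h2 : ∏ i ∈ Finset.range n, ‖z - e i‖ ^ (-(1 / 2) : ℝ) ≤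
      (∏ i ∈ Finset.range n, b i ^ (1 / 2 : ℝ)) * (y ^ (-(1 / 2) : ℝ)) ^ n := by
    refine (Finset.prod_le_prod (fun i _ => by positivity) h1).trans_eq ?_
    rw [Finset.prod_mul_distrib, Finset.prod_const, Finset.card_range]
  have hP : 0 ≤ ∏ i ∈ Finset.range n, b i ^ (1 / 2 : ℝ) :=
    Finset.prod_nonneg fun i _ => by have := hbpos i; positivity
  have h3 : ‖z‖ ^ j ≤ y ^ j := pow_le_pow_left₀ (norm_nonneg _) (by simp [hy]) _
  have h4 : y ^ j * (y ^ (-(1 / 2) : ℝ)) ^ n ≤ y ^ (-(3 / 2) : ℝ) := by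
    rw [← Real.rpow_natCast, ← Real.rpow_natCast, ← Real.rpow_mul (by linarith),
      ← Real.rpow_add (by linarith)]
    refine Real.rpow_le_rpow_of_exponent_le hy1 ?_
    have : (2 * j + 3 : ℝ) ≤ n := by exact_mod_cast hj
    linarith
  calc _ ≤ y ^ j * ((∏ i ∈ Finset.range n, b i ^ (1 / 2 : ℝ)) * (y ^ (-(1 / 2) : ℝ)) ^ n) :=
        mul_le_mul h3 h2 (Finset.prod_nonneg fun i _ => by positivity) (by positivity)
    _ = (∏ i ∈ Finset.range n, b i ^ (1 / 2 : ℝ)) * (y ^ j * (y ^ (-(1 / 2) : ℝ)) ^ n) := by ring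
    _ ≤ _ := mul_le_mul_of_nonneg_left h4 hP

lemma ae_ne_nodes (e : ℕ → ℝ) (n : ℕ) : ∀ᵐ x : ℝ, ∀ i ∈ Finset.range n, x ≠ e i := by
  rw [Filter.eventually_all_finset]
  exact fun i _ => Measure.ae_ne volume (e i)

/-! ### Riemann's bilinear relation -/

lemma measurable_phi_real (e : ℕ → ℝ) (n j : ℕ) : Measurable (fun x : ℝ => phi e n j x) := by
  unfold phi
  refine Measurable.mul (by fun_prop) (Finset.measurable_fun_prod _ fun i _ => ?_)
  exact Measurable.pow_const (by fun_prop) _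

lemma integrable_phi_line (e : ℕ → ℝ) (n j : ℕ) (hj : 2 * j + 2 < n) {y : ℝ} (hy : 0 < y) :
    Integrable (fun x : ℝ => phi e n j (x + y * Complex.I)) := by
  obtain ⟨C, hC⟩ := phi_decay e n j hj hy
  exact integrable_of_decay _ hy (phi_differentiableOn e n j) hC

lemma integrable_phi_real (e : ℕ → ℝ) (n : ℕ) (he : Set.InjOn e (Finset.range n)) (j : ℕ)
    (hj : 2 * j + 2 < n) : Integrable (fun x : ℝ => phi e n j x) :=
  (integrable_pow_wt e n he j hj).mono (measurable_phi_real e n j).aestronglyMeasurable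
    (Filter.Eventually.of_forall fun x => (norm_phi_real e n j x).le)

lemma eventually_pos_le_one : ∀ᶠ y : ℝ in nhdsWithin 0 (Set.Ioi 0), 0 < y ∧ |y| ≤ 1 := by
  filter_upwards [Ioc_mem_nhdsGT (zero_lt_one : (0 : ℝ) < 1)] with y hy
  exact ⟨hy.1, by rw [abs_of_pos hy.1]; exact hy.2⟩

/-- The integral of the boundary value over the whole line vanishes. -/
lemma integral_phi_real (e : ℕ → ℝ) (n : ℕ) (he : Set.InjOn e (Finset.range n)) (j : ℕ)
    (hj : 2 * j + 2 < n) : ∫ x : ℝ, phi e n j x = 0 := by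
  have hlim : Filter.Tendsto (fun y : ℝ => ∫ x : ℝ, phi e n j (x + y * Complex.I))
      (nhdsWithin 0 (Set.Ioi 0)) (nhds (∫ x : ℝ, phi e n j x)) := by
    refine tendsto_integral_filter_of_dominated_convergence
      (fun x => (1 + |x|) ^ j * wt e n x) ?_ ?_ (integrable_bound e n he j hj) ?_
    · filter_upwards [eventually_pos_le_one] with y hy
      exact (integrable_phi_line e n j hj hy.1).aestronglyMeasurable
    · filter_upwards [eventually_pos_le_one] with y hy
      filter_upwards [ae_ne_nodes e n] with x hx using norm_phi_le e n hx hy.2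
    · filter_upwards [ae_ne_nodes e n] with x hx using phi_tendsto e n j hx
  refine tendsto_nhds_unique hlim (tendsto_const_nhds.congr' ?_)
  filter_upwards [eventually_pos_le_one] with y hy
  obtain ⟨C, hC⟩ := phi_decay e n j hj hy.1
  exact (integral_line_eq_zero _ hy.1 (phi_differentiableOn e n j) hC).symm

/-- The complex bilinear relation on a horizontal line: with the second variable written as `x + s`,
the integral in `x` vanishes for each fixed `s > 0` because `z ↦ φ_j(z) φ_j'(z + s)` is holomorphic in
the upper half-plane. -/
lemma integral_phi_line_lt (e : ℕ → ℝ) (n j j' : ℕ) (hj : 2 * j + 2 < n) (hj' : 2 * j' + 2 < n)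
    {y : ℝ} (hy : 0 < y) :
    ∫ p : ℝ × ℝ, {p : ℝ × ℝ | p.1 < p.2}.indicator
      (fun p => phi e n j (p.1 + y * Complex.I) * phi e n j' (p.2 + y * Complex.I)) p = 0 := by
  set G : ℝ × ℝ → ℂ := {p : ℝ × ℝ | p.1 < p.2}.indicator
      (fun p => phi e n j (p.1 + y * Complex.I) * phi e n j' (p.2 + y * Complex.I)) with hG
  have hmeas : MeasurableSet {p : ℝ × ℝ | p.1 < p.2} :=
    measurableSet_lt measurable_fst measurable_snd
  have hGi : Integrable G :=
    ((integrable_phi_line e n j hj hy).mul_prod (integrable_phi_line e n j' hj' hy)).indicator hmeas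
  have hmp : MeasurePreserving (fun z : ℝ × ℝ => (z.1, z.1 + z.2)) :=
    measurePreserving_prod_add (volume : Measure ℝ) (volume : Measure ℝ)
  have hme : MeasurableEmbedding (fun z : ℝ × ℝ => (z.1, z.1 + z.2)) :=
    (MeasurableEquiv.shearAddRight ℝ).measurableEmbedding
  rw [← hmp.integral_comp hme G, Measure.volume_eq_prod, integral_prod_symm]
  · refine integral_eq_zero_of_ae (Filter.Eventually.of_forall fun s => ?_)
    simp only [Pi.zero_apply]
    by_cases hs : 0 < s
    · have h1 : ∀ x : ℝ, G (x, x + s) = (fun z : ℂ => phi e n j z * phi e n j' (z + s))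
          (x + y * Complex.I) := by
        intro x
        rw [hG, Set.indicator_of_mem (by simpa using hs)]
        simp only
        congr 2
        push_cast; ring
      simp_rw [h1]
      obtain ⟨C, hC⟩ := phi_decay e n j hj hy
      obtain ⟨C', hC'⟩ := phi_decay e n j' hj' hy
      have hC'0 : 0 ≤ C' := by
        have := (norm_nonneg _).trans (hC' (y * Complex.I) (by simp))
        exact nonneg_of_mul_nonneg_left this (by positivity)
      refine integral_line_eq_zero (fun z : ℂ => phi e n j z * phi e n j' (z + s))
        (C := C * C') hy ?_ fun z hz => ?_
      · refine (phi_differentiableOn e n j).mul ((phi_differentiableOn e n j').comp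
          (by fun_prop) fun z hz => ?_)
        simpa using hz
      · rw [norm_mul]
        have h2 : ‖phi e n j' (z + s)‖ ≤ C' := by
          refine (hC' (z + s) (by simpa using hz)).trans (mul_le_of_le_one_right hC'0 ?_)
          exact Real.rpow_le_one_of_one_le_of_nonpos (by simp) (by norm_num)
        have h3 := mul_le_mul (hC z hz) h2 (norm_nonneg _) ((norm_nonneg _).trans (hC z hz))
        linarith
    · have h1 : ∀ x : ℝ, G (x, x + s) = 0 := by
        intro x
        rw [hG, Set.indicator_of_notMem (by simpa using hs)]
      simp [h1]
  · exact (hmp.integrable_comp_emb hme).mpr hGi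

/-- The complex bilinear relation on the real axis, as a limit of the relation on horizontal lines. -/
lemma integral_phi_real_lt (e : ℕ → ℝ) (n : ℕ) (he : Set.InjOn e (Finset.range n)) (j j' : ℕ)
    (hj : 2 * j + 2 < n) (hj' : 2 * j' + 2 < n) :
    ∫ p : ℝ × ℝ, {p : ℝ × ℝ | p.1 < p.2}.indicator
      (fun p => phi e n j p.1 * phi e n j' p.2) p = 0 := by
  have hmeas : MeasurableSet {p : ℝ × ℝ | p.1 < p.2} :=
    measurableSet_lt measurable_fst measurable_snd
  have hae1 : ∀ᵐ p : ℝ × ℝ, ∀ i ∈ Finset.range n, p.1 ≠ e i :=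
    Measure.quasiMeasurePreserving_fst.ae (ae_ne_nodes e n)
  have hae2 : ∀ᵐ p : ℝ × ℝ, ∀ i ∈ Finset.range n, p.2 ≠ e i :=
    Measure.quasiMeasurePreserving_snd.ae (ae_ne_nodes e n)
  have hlim : Filter.Tendsto (fun y : ℝ => ∫ p : ℝ × ℝ, {p : ℝ × ℝ | p.1 < p.2}.indicator
      (fun p => phi e n j (p.1 + y * Complex.I) * phi e n j' (p.2 + y * Complex.I)) p)
      (nhdsWithin 0 (Set.Ioi 0)) (nhds (∫ p : ℝ × ℝ, {p : ℝ × ℝ | p.1 < p.2}.indicator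
      (fun p => phi e n j p.1 * phi e n j' p.2) p)) := by
    refine tendsto_integral_filter_of_dominated_convergence
      (fun p => ((1 + |p.1|) ^ j * wt e n p.1) * ((1 + |p.2|) ^ j' * wt e n p.2)) ?_ ?_
      ((integrable_bound e n he j hj).mul_prod (integrable_bound e n he j' hj')) ?_
    · filter_upwards [eventually_pos_le_one] with y hy
      exact (((integrable_phi_line e n j hj hy.1).mul_prod
        (integrable_phi_line e n j' hj' hy.1)).indicator hmeas).aestronglyMeasurable
    · filter_upwards [eventually_pos_le_one] with y hy
      filter_upwards [hae1, hae2] with p h1 h2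
      refine (norm_indicator_le_norm_self _ _).trans ?_
      rw [norm_mul]
      have h3 := norm_phi_le e n (j := j) h1 hy.2
      exact mul_le_mul h3 (norm_phi_le e n h2 hy.2) (norm_nonneg _) ((norm_nonneg _).trans h3)
    · filter_upwards [hae1, hae2] with p h1 h2
      by_cases hp : p ∈ {p : ℝ × ℝ | p.1 < p.2}
      · simp only [Set.indicator_of_mem hp]
        exact (phi_tendsto e n j h1).mul (phi_tendsto e n j' h2)
      · simp only [Set.indicator_of_notMem hp]
        exact tendsto_const_nhds
  refine tendsto_nhds_unique hlim (tendsto_const_nhds.congr' ?_)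
  filter_upwards [eventually_pos_le_one] with y hy
  exact (integral_phi_line_lt e n j j' hj hj' hy.1).symm

/-- The real bilinear pairing `∬_{x < y} Re φ_j(x) Im φ_j'(y) dx dy`. -/
noncomputable def pairing (e : ℕ → ℝ) (n j j' : ℕ) : ℝ :=
  ∫ p : ℝ × ℝ, {p : ℝ × ℝ | p.1 < p.2}.indicator
    (fun p => (phi e n j p.1).re * (phi e n j' p.2).im) p

/-- Powers of `-i` are real or purely imaginary, according to parity. -/
lemma negI_pow_re_mul_im (c : ℕ) : ((-Complex.I) ^ c).re * ((-Complex.I) ^ c).im = 0 := by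
  rcases Nat.even_or_odd' c with ⟨m, rfl | rfl⟩
  · rw [pow_mul]; simp
    right
    rcases neg_one_pow_eq_or ℂ m with h | h <;> simp [h]
  · rw [pow_succ, pow_mul]; simp
    rcases neg_one_pow_eq_or ℂ m with h | h <;> simp [h]

/-- Riemann's bilinear relation: the pairing is symmetric. -/
lemma pairing_symm (e : ℕ → ℝ) (n : ℕ) (he : Set.InjOn e (Finset.range n)) (j j' : ℕ)
    (hj : 2 * j + 2 < n) (hj' : 2 * j' + 2 < n) : pairing e n j j' = pairing e n j' j := by
  have hmeas : MeasurableSet {p : ℝ × ℝ | p.1 < p.2} :=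
    measurableSet_lt measurable_fst measurable_snd
  have hmeas' : MeasurableSet {p : ℝ × ℝ | p.2 < p.1} :=
    measurableSet_lt measurable_snd measurable_fst
  have hi := integrable_phi_real e n he j hj
  have hi' := integrable_phi_real e n he j' hj'
  have hre : Integrable fun x : ℝ => (phi e n j x).re := hi.re
  have him : Integrable fun x : ℝ => (phi e n j x).im := hi.im
  have hre' : Integrable fun x : ℝ => (phi e n j' x).re := hi'.re
  have him' : Integrable fun x : ℝ => (phi e n j' x).im := hi'.im
  have i1 : Integrable (fun p : ℝ × ℝ => {p : ℝ × ℝ | p.1 < p.2}.indicator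
      (fun p => (phi e n j p.1).re * (phi e n j' p.2).im) p) :=
    (hre.mul_prod him').indicator hmeas
  have i2 : Integrable (fun p : ℝ × ℝ => {p : ℝ × ℝ | p.1 < p.2}.indicator
      (fun p => (phi e n j p.1).im * (phi e n j' p.2).re) p) :=
    (him.mul_prod hre').indicator hmeas
  have i3 : Integrable (fun p : ℝ × ℝ => {p : ℝ × ℝ | p.2 < p.1}.indicator
      (fun p => (phi e n j p.1).im * (phi e n j' p.2).re) p) :=
    (him.mul_prod hre').indicator hmeas'
  have i4 : Integrable (fun p : ℝ × ℝ => {p : ℝ × ℝ | p.1 < p.2}.indicator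
      (fun p => phi e n j p.1 * phi e n j' p.2) p) :=
    (hi.mul_prod hi').indicator hmeas
  -- imaginary part of the complex relation
  have h1 : pairing e n j j' + ∫ p : ℝ × ℝ, {p : ℝ × ℝ | p.1 < p.2}.indicator
      (fun p => (phi e n j p.1).im * (phi e n j' p.2).re) p = 0 := by
    rw [pairing, ← integral_add i1 i2]
    have h := congrArg Complex.im (integral_phi_real_lt e n he j j' hj hj')
    have h2 := integral_im (𝕜 := ℂ) i4
    simp only [RCLike.im_to_complex] at h2
    rw [Complex.zero_im] at h
    rw [← h, ← h2]
    refine integral_congr_ae (Filter.Eventually.of_forall fun p => ?_)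
    by_cases hp : p ∈ {p : ℝ × ℝ | p.1 < p.2}
    · simp only [Set.indicator_of_mem hp, Complex.mul_im]
    · simp only [Set.indicator_of_notMem hp, Complex.zero_im, add_zero]
  -- the total integral of `φ_j` vanishes
  have h2 : ∫ p : ℝ × ℝ, (phi e n j p.1).im * (phi e n j' p.2).re = 0 := by
    rw [Measure.volume_eq_prod, integral_prod_mul (fun x : ℝ => (phi e n j x).im)
      (fun x : ℝ => (phi e n j' x).re)]
    have h := congrArg Complex.im (integral_phi_real e n he j hj)
    have h3 := integral_im (𝕜 := ℂ) hi
    simp only [RCLike.im_to_complex] at h3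
    rw [h3, h, Complex.zero_im, zero_mul]
  have h3 : pairing e n j' j = ∫ p : ℝ × ℝ, {p : ℝ × ℝ | p.2 < p.1}.indicator
      (fun p => (phi e n j p.1).im * (phi e n j' p.2).re) p := by
    rw [pairing, Measure.volume_eq_prod, ← integral_prod_swap]
    refine integral_congr_ae (Filter.Eventually.of_forall fun p => ?_)
    simp only [Set.indicator, Set.mem_ofPred_eq, Prod.fst_swap, Prod.snd_swap, mul_comm]
  -- the diagonal does not contribute because one of the factors vanishes there
  have h4 : (∫ p : ℝ × ℝ, {p : ℝ × ℝ | p.1 < p.2}.indicator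
      (fun p => (phi e n j p.1).im * (phi e n j' p.2).re) p) + pairing e n j' j = 0 := by
    rw [h3, ← integral_add i2 i3, ← h2]
    refine integral_congr_ae (Filter.Eventually.of_forall fun p => ?_)
    simp only [Set.indicator, Set.mem_ofPred_eq]
    rcases lt_trichotomy p.1 p.2 with h | h | h
    · simp [h, h.not_gt]
    · have := negI_pow_re_mul_im (rk e n p.2)
      simp only [h, lt_self_iff_false, if_false, phi_real, Complex.re_ofReal_mul,
        Complex.im_ofReal_mul]
      linear_combination -(p.2 ^ j * wt e n p.2) * (p.2 ^ j' * wt e n p.2) * this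
    · simp [h, h.not_gt]
  linarith

/-! ### Evaluation of the pairing on the gaps -/

lemma rk_anti (e : ℕ → ℝ) (n : ℕ) {x y : ℝ} (h : x ≤ y) : rk e n y ≤ rk e n x :=
  Finset.card_le_card fun _ hi => by
    rw [Finset.mem_filter] at hi ⊢
    exact ⟨hi.1, h.trans_lt hi.2⟩

lemma rk_le (e : ℕ → ℝ) (n : ℕ) (x : ℝ) : rk e n x ≤ n :=
  (Finset.card_filter_le _ _).trans_eq (Finset.card_range n)

lemma lt_node_iff (e : ℕ → ℝ) (n : ℕ) (he : StrictMonoOn e (Set.Iio n)) {i : ℕ} (hi : i < n)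
    (x : ℝ) : x < e i ↔ n - i ≤ rk e n x := by
  constructor
  · intro h
    rw [← Nat.card_Ico]
    refine Finset.card_le_card fun m hm => ?_
    rw [Finset.mem_Ico] at hm
    rw [Finset.mem_filter, Finset.mem_range]
    exact ⟨hm.2, h.trans_le (he.monotoneOn (Set.mem_Iio.mpr hi) (Set.mem_Iio.mpr hm.2) hm.1)⟩
  · intro h
    by_contra! hx
    have : rk e n x ≤ (Finset.Ico (i + 1) n).card := by
      refine Finset.card_le_card fun m hm => ?_
      rw [Finset.mem_filter, Finset.mem_range] at hm
      rw [Finset.mem_Ico]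
      refine ⟨?_, hm.1⟩
      by_contra! hmi
      have := he.monotoneOn (Set.mem_Iio.mpr hm.1) (Set.mem_Iio.mpr hi) (Nat.lt_succ_iff.mp hmi)
      linarith [hm.2]
    rw [Nat.card_Ico] at this
    omega

/-- The moment `∫ x ^ j / √|f|` over the `i`-th gap between consecutive branch points. -/
noncomputable def gap (e : ℕ → ℝ) (n i j : ℕ) : ℝ :=
  ∫ x in (e i)..(e (i + 1)), x ^ j * wt e n x

/-- The `i`-th gap is the set of points with `n - 1 - i` branch points to the right. -/
lemma integral_rk_eq (e : ℕ → ℝ) (n : ℕ) (he : StrictMonoOn e (Set.Iio n)) {i : ℕ}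
    (hi : i + 1 < n) (j : ℕ) :
    ∫ x : ℝ, (if rk e n x = n - 1 - i then x ^ j * wt e n x else 0) = gap e n i j := by
  have hle : e i ≤ e (i + 1) := (he (Set.mem_Iio.mpr (by omega)) (Set.mem_Iio.mpr hi) (by omega)).le
  rw [gap, intervalIntegral.integral_of_le hle, ← integral_Ico_eq_integral_Ioc,
    ← MeasureTheory.integral_indicator measurableSet_Ico]
  refine integral_congr_ae (Filter.Eventually.of_forall fun x => ?_)
  have h1 := lt_node_iff e n he (show i < n by omega) x
  have h2 := lt_node_iff e n he hi x
  have h3 : rk e n x = n - 1 - i ↔ x ∈ Set.Ico (e i) (e (i + 1)) := by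
    rw [Set.mem_Ico, ← not_lt, h1, h2]; omega
  simp only [Set.indicator, h3]

/-- The signs of the pairing: they match the unit lower triangular matrix with alternating
entries which passes from the gaps to the dual cycles. -/
lemma negI_sign_sum (g c c' : ℕ) (hc : c ≤ 2 * g + 1) :
    (if c' < c then ((-Complex.I) ^ c).re * ((-Complex.I) ^ c').im else 0) =
    ∑ k : Fin g, ∑ l : Fin g, if k ≤ l then (-1 : ℝ) ^ ((l : ℕ) - k) *
      (if c = 2 * g + 1 - 1 - 2 * k then 1 else 0) *
      (if c' = 2 * g + 1 - 1 - (2 * l + 1) then 1 else 0) else 0 := by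
  have hre : ∀ m : ℕ, ((-Complex.I) ^ (2 * m + 1)).re = 0 := by
    intro m
    rw [pow_succ, pow_mul]; simp
    rcases neg_one_pow_eq_or ℂ m with h | h <;> simp [h]
  have him : ∀ m : ℕ, ((-Complex.I) ^ (2 * m)).im = 0 := by
    intro m
    rw [pow_mul]; simp
    rcases neg_one_pow_eq_or ℂ m with h | h <;> simp [h]
  have hre' : ∀ m : ℕ, ((-Complex.I) ^ (2 * m)).re = (-1) ^ m := by
    intro m
    rw [pow_mul]; simp
    rcases Nat.even_or_odd m with h | h <;> simp [h.neg_one_pow]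
  have him' : ∀ m : ℕ, ((-Complex.I) ^ (2 * m + 1)).im = -(-1) ^ m := by
    intro m
    rw [pow_succ, pow_mul]; simp
    rcases Nat.even_or_odd m with h | h <;> simp [h.neg_one_pow]
  rcases Nat.even_or_odd' c with ⟨m, rfl | rfl⟩
  swap
  · rw [hre, zero_mul, ite_self]
    symm
    refine Finset.sum_eq_zero fun k _ => Finset.sum_eq_zero fun l _ => ?_
    rw [if_neg (show ¬ (2 * m + 1 = 2 * g + 1 - 1 - 2 * (k : ℕ)) by omega)]
    simp
  rcases Nat.even_or_odd' c' with ⟨m', rfl | rfl⟩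
  · rw [him, mul_zero, ite_self]
    symm
    refine Finset.sum_eq_zero fun k _ => Finset.sum_eq_zero fun l _ => ?_
    rw [if_neg (show ¬ (2 * m' = 2 * g + 1 - 1 - (2 * (l : ℕ) + 1)) by omega)]
    simp
  rw [hre', him']
  by_cases h : m' < m
  · rw [if_pos (by omega)]
    rw [Finset.sum_eq_single (⟨g - m, by omega⟩ : Fin g),
      Finset.sum_eq_single (⟨g - 1 - m', by omega⟩ : Fin g)]
    · rw [if_pos (by rw [Fin.le_def]; simp only; omega), if_pos (by simp only; omega),
        if_pos (by simp only; omega)]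
      simp only [mul_one]
      rw [show g - 1 - m' - (g - m) = m - 1 - m' by omega]
      obtain ⟨d, rfl⟩ : ∃ d, m = m' + 1 + d := ⟨m - m' - 1, by omega⟩
      rw [show m' + 1 + d - 1 - m' = d by omega, pow_add, pow_succ]
      rcases neg_one_pow_eq_or ℝ m' with h | h <;> rw [h] <;> ring
    · intro l _ hl
      rw [if_neg (c := 2 * m' + 1 = _)]
      · simp
      · intro h'; apply hl; ext; simp only; omega
    · simp
    · intro k _ hk
      refine Finset.sum_eq_zero fun l _ => ?_
      rw [if_neg (c := 2 * m = _)]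
      · simp
      · intro h'; apply hk; ext; simp only; omega
    · simp
  · rw [if_neg (by omega)]
    symm
    refine Finset.sum_eq_zero fun k _ => Finset.sum_eq_zero fun l _ => ?_
    by_cases hkl : k ≤ l
    · rw [if_pos hkl]
      have : (k : ℕ) ≤ l := hkl
      by_cases h1 : 2 * m = 2 * g + 1 - 1 - 2 * (k : ℕ)
      · rw [if_neg (c := 2 * m' + 1 = _) (by omega), mul_zero]
      · rw [if_neg h1]; simp
    · rw [if_neg hkl]

/-- The pairing is the intersection form evaluated on the integrals over the gaps. -/
lemma pairing_eq_sum (g : ℕ) (e : ℕ → ℝ) (he : StrictMonoOn e (Set.Iio (2 * g + 1))) (j j' : ℕ)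
    (hj : j < g) (hj' : j' < g) :
    pairing e (2 * g + 1) j j' = ∑ k : Fin g, ∑ l : Fin g,
      if k ≤ l then (-1 : ℝ) ^ ((l : ℕ) - k) *
        gap e (2 * g + 1) (2 * k) j * gap e (2 * g + 1) (2 * l + 1) j' else 0 := by
  set n := 2 * g + 1 with hn
  have hinj : Set.InjOn e (Finset.range n) := by
    rw [Finset.coe_range]; exact he.injOn
  set F : ℕ → ℕ → ℝ → ℝ := fun i j x => if rk e n x = n - 1 - i then x ^ j * wt e n x else 0 with hF
  have hFi : ∀ i j, j < g → Integrable (F i j) := by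
    intro i j hj
    have hm : Measurable (rk e n) := (show Antitone (rk e n) from fun _ _ h => rk_anti e n h).measurable
    have hs : MeasurableSet {x | rk e n x = n - 1 - i} := hm (measurableSet_singleton _)
    have := (integrable_pow_wt e n hinj j (by omega)).indicator hs
    refine this.congr (Filter.Eventually.of_forall fun x => ?_)
    simp [hF, Set.indicator]
  have hpt : ∀ p : ℝ × ℝ, {p : ℝ × ℝ | p.1 < p.2}.indicator
      (fun p => (phi e n j p.1).re * (phi e n j' p.2).im) p =
      ∑ k : Fin g, ∑ l : Fin g, (if k ≤ l then (-1 : ℝ) ^ ((l : ℕ) - k) else 0) *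
        (F (2 * k) j p.1 * F (2 * l + 1) j' p.2) := by
    intro p
    have h1 : {p : ℝ × ℝ | p.1 < p.2}.indicator
        (fun p => (phi e n j p.1).re * (phi e n j' p.2).im) p =
        (p.1 ^ j * wt e n p.1) * (p.2 ^ j' * wt e n p.2) *
        (if rk e n p.2 < rk e n p.1 then ((-Complex.I) ^ rk e n p.1).re *
          ((-Complex.I) ^ rk e n p.2).im else 0) := by
      simp only [Set.indicator, Set.mem_ofPred_eq, phi_real, Complex.re_ofReal_mul,
        Complex.im_ofReal_mul]
      by_cases h : p.1 < p.2
      · rw [if_pos h]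
        rcases (rk_anti e n h.le).lt_or_eq with h2 | h2
        · rw [if_pos h2]; ring
        · rw [if_neg (by omega), h2]
          linear_combination (p.1 ^ j * wt e n p.1) * (p.2 ^ j' * wt e n p.2) *
            negI_pow_re_mul_im (rk e n p.1)
      · rw [if_neg h, if_neg (not_lt.mpr (rk_anti e n (not_lt.mp h))), mul_zero]
    rw [h1, negI_sign_sum g _ _ (rk_le e n p.1), Finset.mul_sum]
    refine Finset.sum_congr rfl fun k _ => ?_
    rw [Finset.mul_sum]
    refine Finset.sum_congr rfl fun l _ => ?_
    simp only [hF]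
    split_ifs <;> simp <;> ring
  have hterm : ∀ k l : Fin g, ∫ p : ℝ × ℝ, F (2 * k) j p.1 * F (2 * l + 1) j' p.2 =
      gap e n (2 * k) j * gap e n (2 * l + 1) j' := by
    intro k l
    rw [Measure.volume_eq_prod, integral_prod_mul (F (2 * k) j) (F (2 * l + 1) j')]
    simp only [hF]
    rw [integral_rk_eq e n he (by omega), integral_rk_eq e n he (by omega)]
  have hint : ∀ k l : Fin g, Integrable fun p : ℝ × ℝ =>
      (if k ≤ l then (-1 : ℝ) ^ ((l : ℕ) - k) else 0) *
        (F (2 * k) j p.1 * F (2 * l + 1) j' p.2) := fun k l =>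
    ((hFi (2 * k) j hj).mul_prod (hFi (2 * l + 1) j' hj')).const_mul _
  rw [pairing]
  simp_rw [hpt]
  rw [integral_finsetSum _ fun k _ => integrable_finsetSum _ fun l _ => hint k l]
  refine Finset.sum_congr rfl fun k _ => ?_
  rw [integral_finsetSum _ fun l _ => hint k l]
  refine Finset.sum_congr rfl fun l _ => ?_
  rw [MeasureTheory.integral_const_mul, hterm]
  split_ifs <;> ring

/-! ### Positive definiteness for general branch points -/

/-- For strictly increasing branch points `e 0 < ⋯ < e (2 g)` the matrix of periods over the dual
cycles, normalized by the periods over the gaps of even index, is positive definite. -/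
theorem posDef_gap (g : ℕ) (e : ℕ → ℝ) (he : StrictMonoOn e (Set.Iio (2 * g + 1))) :
    ((Matrix.of fun j k : Fin g => gap e (2 * g + 1) (2 * k) j)⁻¹ *
      ((Matrix.of fun j l : Fin g => gap e (2 * g + 1) (2 * l + 1) j) *
        (Matrix.of fun l k : Fin g => if k ≤ l then (-1 : ℝ) ^ ((l : ℕ) - k) else 0))).PosDef := by
  have hinj : Set.InjOn e (Finset.range (2 * g + 1)) := by
    rw [Finset.coe_range]; exact he.injOn
  refine posDef_inv_mul _ _ _ ?_ ?_ ?_ ?_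
  · intro l k hlk
    rw [Matrix.of_apply, if_neg (not_le.mpr hlk)]
  · intro k; simp
  · intro m
    -- the first `m` even gaps followed by the odd gaps of index `≥ m` are in increasing order
    set σ : Fin g → ℕ := fun k => if (k : ℕ) < m then 2 * k else 2 * k + 1 with hσ
    have hσle : ∀ k, σ k + 1 < 2 * g + 1 := by
      intro k; simp only [hσ]; split_ifs <;> omega
    have hσlt : ∀ k l, k < l → σ k + 1 ≤ σ l := by
      intro k l hkl
      have : (k : ℕ) < l := hkl
      simp only [hσ]; split_ifs <;> omega
    have h := det_moments_pos (wt e (2 * g + 1)) (fun k => e (σ k)) (fun k => e (σ k + 1))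
      (fun k => he (Set.mem_Iio.mpr (by have := hσle k; omega)) (Set.mem_Iio.mpr (hσle k))
        (by omega))
      (fun k l hkl => he.monotoneOn (Set.mem_Iio.mpr (hσle k))
        (Set.mem_Iio.mpr (by have := hσle l; omega)) (hσlt k l hkl))
      (fun k x hx => ?_)
      (fun k j => (integrable_pow_wt e _ hinj j (by omega)).intervalIntegrable)
    · refine h.trans_eq (congrArg Matrix.det ?_)
      ext j k
      simp only [mixCols, Matrix.of_apply, gap, hσ]
      split_ifs <;> rfl
    · rw [wt]
      refine inv_pos.mpr (Real.sqrt_pos.mpr (abs_pos.mpr (Finset.prod_ne_zero_iff.mpr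
        fun i hi => sub_ne_zero.mpr ?_)))
      rintro rfl
      have hi' : i < 2 * g + 1 := Finset.mem_range.mp hi
      have h1 := (he.lt_iff_lt (Set.mem_Iio.mpr (by have := hσle k; omega))
        (Set.mem_Iio.mpr hi')).mp hx.1
      have h2 := (he.lt_iff_lt (Set.mem_Iio.mpr hi') (Set.mem_Iio.mpr (hσle k))).mp hx.2
      omega
  · have hentry : ∀ j j' : Fin g,
        ((Matrix.of fun j l : Fin g => gap e (2 * g + 1) (2 * l + 1) j) *
        (Matrix.of fun l k : Fin g => if k ≤ l then (-1 : ℝ) ^ ((l : ℕ) - k) else 0) *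
        (Matrix.of fun j k : Fin g => gap e (2 * g + 1) (2 * k) j)ᵀ) j j' =
        pairing e (2 * g + 1) j' j := by
      intro j j'
      rw [pairing_eq_sum g e he _ _ j'.2 j.2, Matrix.mul_apply]
      refine Finset.sum_congr rfl fun k _ => ?_
      rw [Matrix.mul_apply, Finset.sum_mul]
      refine Finset.sum_congr rfl fun l _ => ?_
      simp only [Matrix.of_apply, Matrix.transpose_apply]
      split_ifs <;> ring
    ext j j'
    rw [Matrix.transpose_apply, hentry, hentry]
    exact pairing_symm e _ hinj _ _ (by omega) (by omega)

/-! ### The symmetric configuration of branch points -/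

/-- The branch points `-a (g-1) < ⋯ < -a 0 < 0 < a 0 < ⋯ < a (g-1)` of the curve, in increasing
order. -/
def branch (g : ℕ) (a : ℕ → ℝ) (i : ℕ) : ℝ :=
  if i < g then -a (g - 1 - i) else if i = g then 0 else a (i - g - 1)

lemma branch_reflect (g : ℕ) (a : ℕ → ℝ) {i : ℕ} (hi : i ≤ 2 * g) :
    branch g a (2 * g - i) = -branch g a i := by
  unfold branch
  rcases lt_trichotomy i g with h | rfl | h
  · rw [if_neg (by omega), if_neg (by omega), if_pos h, neg_neg]
    congr 1; omega
  · rw [if_neg (by omega), if_pos (by omega), if_neg (by omega), if_pos rfl, neg_zero]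
  · rw [if_pos (by omega), if_neg (by omega), if_neg (by omega)]
    congr 2; omega

lemma branch_right (g : ℕ) (a : ℕ → ℝ) (m : ℕ) : branch g a (g + 1 + m) = a m := by
  unfold branch
  rw [if_neg (by omega), if_neg (by omega)]
  congr 1; omega

lemma branch_mid (g : ℕ) (a : ℕ → ℝ) : branch g a g = 0 := by
  unfold branch
  rw [if_neg (by omega), if_pos rfl]

lemma branch_strictMono (g : ℕ) (a : ℕ → ℝ) (ha0 : a 0 = 1) (hmono : StrictMonoOn a (Set.Iio g)) :
    StrictMonoOn (branch g a) (Set.Iio (2 * g + 1)) := by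
  have hpos : ∀ i < g, 0 < a i := by
    intro i hi
    have := hmono.monotoneOn (Set.mem_Iio.mpr (by omega : 0 < g)) (Set.mem_Iio.mpr hi)
      (Nat.zero_le i)
    linarith
  intro i hi j hj hij
  rw [Set.mem_Iio] at hi hj
  unfold branch
  split_ifs with h1 h2 h3 h4 h5 h6
  · exact neg_lt_neg (hmono (Set.mem_Iio.mpr (by omega)) (Set.mem_Iio.mpr (by omega)) (by omega))
  · exact neg_lt_zero.mpr (hpos _ (by omega))
  · linarith [hpos (g - 1 - i) (by omega), hpos (j - g - 1) (by omega)]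
  all_goals first
    | omega
    | exact hpos _ (by omega)
    | exact hmono (Set.mem_Iio.mpr (by omega)) (Set.mem_Iio.mpr (by omega)) (by omega)

lemma wt_branch (g : ℕ) (a : ℕ → ℝ) (x : ℝ) :
    wt (branch g a) (2 * g + 1) x =
      (Real.sqrt |x * ∏ i ∈ Finset.range g, (x ^ 2 - a i ^ 2)|)⁻¹ := by
  have h : ∏ i ∈ Finset.range (2 * g + 1), (x - branch g a i) =
      x * ∏ i ∈ Finset.range g, (x ^ 2 - a i ^ 2) := by
    rw [show 2 * g + 1 = g + 1 + g by ring, Finset.prod_range_add, Finset.prod_range_succ,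
      branch_mid, sub_zero, ← Finset.prod_range_reflect, mul_right_comm, ← Finset.prod_mul_distrib,
      mul_comm]
    congr 1
    refine Finset.prod_congr rfl fun i hi => ?_
    rw [Finset.mem_range] at hi
    rw [branch_right, branch, if_pos (by omega), show g - 1 - (g - 1 - i) = i by omega]
    ring
  rw [wt, h]

lemma wt_branch_neg (g : ℕ) (a : ℕ → ℝ) (x : ℝ) :
    wt (branch g a) (2 * g + 1) (-x) = wt (branch g a) (2 * g + 1) x := by
  rw [wt_branch, wt_branch, neg_mul, abs_neg, neg_sq]

/-- The symmetry `x ↦ -x` exchanges the gaps and multiplies the moments by a sign. -/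
lemma gap_reflect (g : ℕ) (a : ℕ → ℝ) {i : ℕ} (hi : i < 2 * g) (j : ℕ) :
    gap (branch g a) (2 * g + 1) (2 * g - 1 - i) j =
      (-1) ^ j * gap (branch g a) (2 * g + 1) i j := by
  rw [gap, gap, show 2 * g - 1 - i = 2 * g - (i + 1) by omega, branch_reflect g a (by omega),
    show 2 * g - (i + 1) + 1 = 2 * g - i by omega, branch_reflect g a (by omega),
    ← intervalIntegral.integral_comp_neg, ← intervalIntegral.integral_const_mul]
  refine intervalIntegral.integral_congr fun x _ => ?_
  simp only [wt_branch_neg]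
  rw [neg_pow]; ring

lemma gap_right (g : ℕ) (a : ℕ → ℝ) (m j : ℕ) :
    gap (branch g a) (2 * g + 1) (g + 1 + m) j = ∫ z in (a m)..(a (m + 1)),
      z ^ j / Real.sqrt |z * ∏ i ∈ Finset.range g, (z ^ 2 - a i ^ 2)| := by
  rw [gap, branch_right, show g + 1 + m + 1 = g + 1 + (m + 1) by ring, branch_right]
  simp only [wt_branch, div_eq_mul_inv]

lemma gap_mid (g : ℕ) (a : ℕ → ℝ) (ha0 : a 0 = 1) (j : ℕ) :
    gap (branch g a) (2 * g + 1) g j = ∫ z in (0 : ℝ)..(1 : ℝ),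
      z ^ j / Real.sqrt |z * ∏ i ∈ Finset.range g, (z ^ 2 - a i ^ 2)| := by
  rw [gap, branch_mid, show g + 1 = g + 1 + 0 by ring, branch_right, ha0]
  simp only [wt_branch, div_eq_mul_inv]

/-- The columns of `Π₀` are the moments over the gaps of even index. -/
lemma piZero_eq (g : ℕ) (a : ℕ → ℝ) (ha0 : a 0 = 1) :
    PiZero g a = Matrix.of fun j k : Fin g => gap (branch g a) (2 * g + 1) (2 * k) j := by
  have hright : ∀ (k m j : ℕ), 2 * k = g + 1 + m →
      gap (branch g a) (2 * g + 1) (2 * k) j = ∫ z in (a m)..(a (m + 1)),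
        z ^ j / Real.sqrt |z * ∏ i ∈ Finset.range g, (z ^ 2 - a i ^ 2)| := by
    intro k m j h
    rw [h, gap_right]
  have hleft : ∀ (k m j : ℕ), 2 * k + m + 2 = g →
      gap (branch g a) (2 * g + 1) (2 * k) j = (-1) ^ j * ∫ z in (a m)..(a (m + 1)),
        z ^ j / Real.sqrt |z * ∏ i ∈ Finset.range g, (z ^ 2 - a i ^ 2)| := by
    intro k m j h
    rw [← gap_right, ← gap_reflect g a (by omega)]
    congr 1; omega
  ext j k
  simp only [PiZero, Matrix.of_apply, Nat.add_sub_cancel]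
  have hk := k.2
  split_ifs with h1 h2 h3 h4 h5 h6 h7
  · exact (hleft k _ j (by omega)).symm
  · rw [hleft k 0 j (by omega), ha0]
  · rw [show 2 * (k : ℕ) = g by omega, gap_mid g a ha0]
  · rw [hright k (2 * (k + 1) - g - 3) j (by omega)]
    congr 2; omega
  · exact (hleft k _ j (by omega)).symm
  · rw [← gap_mid g a ha0, ← gap_reflect g a (by omega)]
    congr 1; omega
  · rw [hright k 0 j (by omega), ha0]
  · rw [hright k (2 * (k + 1) - g - 3) j (by omega)]
    congr 2; omega

/-- Multiplication by `M` reflects the columns of `Π₀` into the moments over the gaps of odd index,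
in reverse order; `N` is the matrix of the dual cycles with its rows reversed. -/
lemma mul_piZero_mul (g : ℕ) (a : ℕ → ℝ) (ha0 : a 0 = 1) :
    (Matrix.diagonal fun j : Fin g => (-1 : ℝ) ^ (j : ℕ)) * PiZero g a *
      (Matrix.of fun j k : Fin g => if (j : ℕ) + 1 + ((k : ℕ) + 1) ≤ g + 1 then
        (-1 : ℝ) ^ (g + 1 - ((j : ℕ) + 1) - ((k : ℕ) + 1)) else 0) =
    (Matrix.of fun j l : Fin g => gap (branch g a) (2 * g + 1) (2 * l + 1) j) *
      (Matrix.of fun l k : Fin g => if k ≤ l then (-1 : ℝ) ^ ((l : ℕ) - k) else 0) := by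
  rw [piZero_eq g a ha0]
  ext j k
  rw [Matrix.mul_apply, Matrix.mul_apply]
  refine Fintype.sum_equiv Fin.revPerm _ _ fun l => ?_
  have hl := l.2
  have hk := k.2
  have hrev : ((Fin.rev l : Fin g) : ℕ) = g - (l + 1) := Fin.val_rev l
  rw [Matrix.diagonal_mul]
  simp only [Matrix.of_apply, Fin.revPerm_apply]
  simp only [← gap_reflect g a (show 2 * (l : ℕ) < 2 * g by omega), Fin.le_def, hrev]
  congr 1
  · congr 1; omega
  · by_cases h : (l : ℕ) + k + 1 ≤ g
    · rw [if_pos (by omega), if_pos (by omega)]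
      congr 1; omega
    · rw [if_neg (by omega), if_neg (by omega)]

/-- For `g ≥ 2` and `1 = a 0 < a 1 < ⋯ < a (g-1)`, with `M = diag((-1)^{j-1})` and
`N j k = (-1)^{g+1-j-k}` for `j + k ≤ g + 1` (1-based) and `0` otherwise, the real
matrix `Π₀⁻¹ M Π₀ N` (the imaginary part of the period matrix) is positive definite. -/
theorem stmt_8 (g : ℕ) (hg : 2 ≤ g) (a : ℕ → ℝ) (ha0 : a 0 = 1)
    (hmono : StrictMonoOn a (Set.Iio g))
    (M N : Matrix (Fin g) (Fin g) ℝ)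
    (hM : M = Matrix.diagonal fun j : Fin g => (-1 : ℝ) ^ (j : ℕ))
    (hN : N = Matrix.of fun j k : Fin g =>
      if (j : ℕ) + 1 + ((k : ℕ) + 1) ≤ g + 1 then
        (-1 : ℝ) ^ (g + 1 - ((j : ℕ) + 1) - ((k : ℕ) + 1))
      else 0) :
    ((PiZero g a)⁻¹ * M * PiZero g a * N).PosDef := by
  rw [Matrix.mul_assoc, Matrix.mul_assoc, ← Matrix.mul_assoc M, hM, hN, mul_piZero_mul g a ha0,
    piZero_eq g a ha0]
  exact posDef_gap g _ (branch_strictMono g a ha0 hmono)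
end

section
/- Let g ≥ 2 and let a₁, …, a_{g−1} be distinct positive real numbers, none equal to 1, with a₁ = min{a₁,…,a_{g−1}} < 1. Set f(x) = x(x²−1)(x²−a₁²)⋯(x²−a_{g−1}²) and define s : ℝ → ℂ by s(t) = √t for t ≥ 0 and s(t) = −i√(−t) for t < 0. Assume the function x ↦ 1/s(f(x)) is integrable on [0, 1]. Then the integral ∫₀¹ 1/s(f(x)) dx is not a real number, i.e., its imaginary part is nonzero. -/
/-!
Since `1 / (-i r) = i / r`, the integrand has imaginary part `(√(-f x))⁻¹`, which is nonnegative
everywhere and positive exactly where `f x < 0`. So it suffices that `f` is negative on a nonempty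
open subset of `(0, 1)`. This holds because `a 1 ∈ (0, 1)` is a simple zero of `f`: if `f` were
nonnegative on `(0, 1)`, then `a 1` would be a local minimum and `f' (a 1)` would vanish.
-/

open MeasureTheory

/-- The imaginary part of `1 / s t` as a single expression, using `√(-t) = 0` for `t ≥ 0`. -/
lemma im_one_div_branch (t : ℝ) :
    (1 / (if 0 ≤ t then (Real.sqrt t : ℂ) else -Complex.I * (Real.sqrt (-t) : ℂ))).im
      = (Real.sqrt (-t))⁻¹ := by
  split_ifs with h
  · rw [Real.sqrt_eq_zero_of_nonpos (by linarith : -t ≤ 0), ← Complex.ofReal_one,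
      ← Complex.ofReal_div, Complex.ofReal_im, inv_zero]
  · have : 1 / (-Complex.I * (Real.sqrt (-t) : ℂ))
        = (((Real.sqrt (-t))⁻¹ : ℝ) : ℂ) * Complex.I := by
      rw [one_div, mul_inv, Complex.ofReal_inv, inv_neg, Complex.inv_I, neg_neg, mul_comm]
    rw [this, Complex.im_ofReal_mul, Complex.I_im, mul_one]

/-- A function with a simple zero `c ∈ (0, 1)` is negative somewhere in `(0, 1)`. -/
lemma exists_neg_of_simple_zero {f h : ℝ → ℝ} {c : ℝ} (hc : c ∈ Set.Ioo (0 : ℝ) 1)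
    (hh : DifferentiableAt ℝ h c) (hhc : h c ≠ 0) (hf : ∀ x, f x = (x - c) * h x) :
    ∃ x ∈ Set.Ioo (0 : ℝ) 1, f x < 0 := by
  by_contra! hnn
  have hmin : IsLocalMin f c := by
    filter_upwards [isOpen_Ioo.mem_nhds hc] with x hx
    have : f c = 0 := by simp [hf]
    rw [this]
    exact hnn x hx
  have hd : HasDerivAt f (h c) c := by
    have := ((hasDerivAt_id c).sub_const c).mul hh.hasDerivAt
    rw [show f = (fun x => id x - c) * h from funext hf]
    simpa using this
  exact hhc (hmin.hasDerivAt_eq_zero hd)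

/-- Let `a 1, …, a (g-1)` be distinct positive reals, none equal to `1`, with
`a 1` their minimum and `a 1 < 1`.  Let `f x = x (x² - 1) ∏ (x² - a i ²)` and let
`s : ℝ → ℂ` be the branch of the square root with `s t = √t` for `t ≥ 0` and
`s t = -i√(-t)` for `t < 0`.  If `x ↦ 1 / s (f x)` is integrable on `[0, 1]`, then
the integral `∫₀¹ 1 / s (f x) dx` is not real: its imaginary part is nonzero. -/
theorem stmt_13 (g : ℕ) (hg : 2 ≤ g) (a : ℕ → ℝ)
    (hpos : ∀ i ∈ Finset.Icc 1 (g - 1), 0 < a i)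
    (hne1 : ∀ i ∈ Finset.Icc 1 (g - 1), a i ≠ 1)
    (hdist : ∀ i ∈ Finset.Icc 1 (g - 1), ∀ j ∈ Finset.Icc 1 (g - 1), i ≠ j → a i ≠ a j)
    (hmin : ∀ i ∈ Finset.Icc 1 (g - 1), a 1 ≤ a i)
    (ha1 : a 1 < 1)
    (s : ℝ → ℂ)
    (hs : ∀ t : ℝ, s t =
      if 0 ≤ t then (Real.sqrt t : ℂ) else -Complex.I * (Real.sqrt (-t) : ℂ))
    (f : ℝ → ℝ)
    (hf : ∀ x, f x = x * (x ^ 2 - 1) * ∏ i ∈ Finset.Icc 1 (g - 1), (x ^ 2 - a i ^ 2))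
    (hint : IntegrableOn (fun x => 1 / s (f x)) (Set.Icc 0 1)) :
    (∫ x in (0 : ℝ)..1, 1 / s (f x)).im ≠ 0 := by
  have h1 : 1 ∈ Finset.Icc 1 (g - 1) := Finset.mem_Icc.2 ⟨le_rfl, by omega⟩
  have hc0 : 0 < a 1 := hpos 1 h1
  have hcont : Continuous f := by
    rw [funext hf]
    fun_prop
  obtain ⟨x₀, hx₀, hfx₀⟩ : ∃ x ∈ Set.Ioo (0 : ℝ) 1, f x < 0 := by
    refine exists_neg_of_simple_zero (c := a 1)
      (h := fun x => x * (x ^ 2 - 1) * (x + a 1) *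
        ∏ i ∈ (Finset.Icc 1 (g - 1)).erase 1, (x ^ 2 - a i ^ 2)) ⟨hc0, ha1⟩ ?_ ?_ ?_
    · fun_prop
    · refine mul_ne_zero (mul_ne_zero (mul_ne_zero hc0.ne' (by nlinarith)) (by linarith)) ?_
      refine Finset.prod_ne_zero_iff.2 fun i hi => ?_
      obtain ⟨hi1, hi⟩ := Finset.mem_erase.1 hi
      have hlt : a 1 < a i := lt_of_le_of_ne (hmin i hi) (hdist 1 h1 i hi (Ne.symm hi1))
      nlinarith
    · intro x
      rw [hf, ← Finset.mul_prod_erase _ _ h1]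
      ring
  have him : ∀ x, (1 / s (f x)).im = (Real.sqrt (-f x))⁻¹ := fun x => by
    rw [hs, im_one_div_branch]
  have hint' : IntegrableOn (fun x => 1 / s (f x)) (Set.Ioc 0 1) :=
    hint.mono_set Set.Ioc_subset_Icc_self
  have hintim : IntegrableOn (fun x => (Real.sqrt (-f x))⁻¹) (Set.Ioc 0 1) :=
    hint'.im.congr (Filter.Eventually.of_forall him)
  have heq : (∫ x in (0 : ℝ)..1, 1 / s (f x)).im
      = ∫ x in Set.Ioc (0 : ℝ) 1, (Real.sqrt (-f x))⁻¹ := by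
    rw [intervalIntegral.integral_of_le zero_le_one]
    refine (integral_im hint').symm.trans ?_
    exact integral_congr_ae (Filter.Eventually.of_forall him)
  rw [heq]
  refine ne_of_gt ((setIntegral_pos_iff_support_of_nonneg_ae
    (Filter.Eventually.of_forall fun x => inv_nonneg.2 (Real.sqrt_nonneg _)) hintim).2 ?_)
  have hopen : IsOpen (Set.Ioo (0 : ℝ) 1 ∩ {x | f x < 0}) :=
    isOpen_Ioo.inter (isOpen_lt hcont continuous_const)
  refine (hopen.measure_pos volume ⟨x₀, hx₀, hfx₀⟩).trans_le (measure_mono ?_)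
  rintro x ⟨hx, hfx : f x < 0⟩
  exact ⟨(inv_pos.2 (Real.sqrt_pos.2 (neg_pos.2 hfx))).ne', Set.Ioo_subset_Ioc_self hx⟩
end
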